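/- arXiv:1904.00590 — 2 statements merged into one kernel-verified Lean document; each statement's English description precedes it below -/
import Mathlib

section
/- For any rational number α > 1 that is not an integer, and any real c with 0 < c < 1, the set of positive integers n such that the distance from α^n to the nearest integer is less than c^n is finite. -/
/-!
This is Roth's method in the form given to it by Ridout. Write `α = a / b` in lowest terms. If
`αⁿ` is within `cⁿ` of an integer `k`, then with `y = bⁿ k` the fraction `aⁿ / y` is close to `1`,
its numerator is a power of `a` and its denominator is divisible by a power of `b`. Infinitely many
such `n` would yield a tuple `n₁, …, nₘ` that is as lacunary as we please. Choose degrees `rₕ` with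
`rₕ nₕ` almost constant.

By Siegel's lemma there is a nonzero integer polynomial of multidegree at most `r` that vanishes to
order almost `m / 2`, measured by `∑ₕ Jₕ / rₕ`, at `(1, …, 1)`, and all of whose monomials have
relative degree within `ε m` of `m / 2`: by a Chernoff bound almost all monomials do. Roth's lemma,
proved by induction on `m` through generalised Wronskians, provides a Taylor coefficient of low
order which does not vanish at the point `(aⁿʰ / yₕ)ₕ`. Since the monomials of the polynomial are
balanced, the numerator of this coefficient is divisible by large powers of `a` and of `b`, which
contradicts the upper bound that comes from the vanishing at `(1, …, 1)`.
-/

namespace RationalPowers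

open MvPolynomial

noncomputable section

/-! ### Taylor shifts and Hasse derivatives -/

section TaylorShift

variable {σ R : Type*} [CommRing R]

/-- The Taylor shift `P ↦ P(X + ξ)`: its coefficients are the Taylor coefficients of `P` at `ξ`. -/
def taylor (ξ : σ → R) : MvPolynomial σ R →ₐ[R] MvPolynomial σ R :=
  aeval fun h => X h + C (ξ h)

lemma taylor_taylor (ξ ζ : σ → R) (P : MvPolynomial σ R) :
    taylor ξ (taylor ζ P) = taylor (ξ + ζ) P := by
  have : (taylor ξ).comp (taylor ζ) = taylor (ξ + ζ) :=
    algHom_ext fun h => by simp [taylor, add_assoc]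
  exact DFunLike.congr_fun this P

lemma taylor_zero (P : MvPolynomial σ R) : taylor (0 : σ → R) P = P := by
  have : taylor (0 : σ → R) = AlgHom.id R _ := algHom_ext fun h => by simp [taylor]
  rw [this, AlgHom.id_apply]

lemma taylor_injective (ξ : σ → R) :
    Function.Injective (taylor ξ : MvPolynomial σ R → MvPolynomial σ R) :=
  Function.LeftInverse.injective (g := taylor (-ξ)) fun P => by
    rw [taylor_taylor, neg_add_cancel, taylor_zero]

lemma map_taylor {S : Type*} [CommRing S] (f : R →+* S) (ξ : σ → R) (P : MvPolynomial σ R) :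
    map f (taylor ξ P) = taylor (fun h => f (ξ h)) (map f P) := by
  induction P using MvPolynomial.induction_on with
  | C a => simp [taylor]
  | add p q hp hq => simp only [map_add, hp, hq]
  | mul_X p n hp => simp only [map_mul, hp, map_X]; simp [taylor]

variable [Fintype σ]

/-- The multi-index binomial coefficient `∏ₕ (iₕ choose Jₕ)`. -/
def binom (i J : σ →₀ ℕ) : ℕ := ∏ h, (i h).choose (J h)

lemma binom_eq_zero {i J : σ →₀ ℕ} (h : ¬ J ≤ i) : binom i J = 0 := by
  rw [Finsupp.le_def, not_forall] at h
  obtain ⟨x, hx⟩ := h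
  exact Finset.prod_eq_zero (Finset.mem_univ x) (Nat.choose_eq_zero_of_lt (not_le.1 hx))

lemma binom_le_two_pow {r : σ → ℕ} {i : σ →₀ ℕ} (h : ∀ x, i x ≤ r x) (J : σ →₀ ℕ) :
    binom i J ≤ 2 ^ ∑ x, r x := by
  rw [← Finset.prod_pow_eq_pow_sum]
  exact Finset.prod_le_prod' fun x _ =>
    (Nat.choose_le_two_pow _ _).trans (Nat.pow_le_pow_right two_pos (h x))

lemma binom_add_mul_binom (i J K : σ →₀ ℕ) :
    binom i (K + J) * binom (K + J) J = binom i J * binom (i - J) K := by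
  simp only [binom, ← Finset.prod_mul_distrib, Finsupp.add_apply, Finsupp.tsub_apply]
  refine Finset.prod_congr rfl fun h _ => ?_
  rw [Nat.choose_mul (Nat.le_add_left _ _), Nat.add_sub_cancel_right]

lemma binom_mul_tsub_apply (i J : σ →₀ ℕ) (h : σ) :
    binom i J * (i - J) h = (J h + 1) * binom i (J + Finsupp.single h 1) := by
  classical
  have away : ∏ x ∈ Finset.univ.erase h, (i x).choose ((J + Finsupp.single h 1 : σ →₀ ℕ) x)
      = ∏ x ∈ Finset.univ.erase h, (i x).choose (J x) :=
    Finset.prod_congr rfl fun x hx => by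
      simp [Finsupp.single_eq_of_ne (Finset.ne_of_mem_erase hx)]
  rw [binom, binom, ← Finset.mul_prod_erase _ _ (Finset.mem_univ h),
    ← Finset.mul_prod_erase _ _ (Finset.mem_univ h), away]
  simp only [Finsupp.add_apply, Finsupp.single_eq_same, Finsupp.tsub_apply]
  calc _ = (∏ x ∈ Finset.univ.erase h, (i x).choose (J x)) *
        ((i h).choose (J h) * (i h - J h)) := by ring
    _ = _ := by rw [← Nat.choose_succ_right_eq]; ring

lemma coeff_taylor_monomial (ξ : σ → R) (i J : σ →₀ ℕ) (a : R) :
    coeff J (taylor ξ (monomial i a)) = a * (binom i J * ∏ h, ξ h ^ (i h - J h)) := by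
  classical
  have expand : taylor ξ (monomial i a) =
      ∑ p ∈ Fintype.piFinset fun h => Finset.range (i h + 1),
        monomial (Finsupp.equivFunOnFinite.symm p)
          (a * ∏ h, (ξ h ^ (i h - p h) * ((i h).choose (p h) : R))) := by
    rw [taylor, aeval_monomial, Finsupp.prod_fintype _ _ fun _ => pow_zero _]
    simp only [add_pow, Finset.prod_univ_sum, algebraMap_eq, Finset.mul_sum]
    refine Finset.sum_congr rfl fun p _ => ?_
    rw [monomial_eq, Finsupp.prod_fintype _ _ fun _ => pow_zero _]
    simp only [map_mul, map_prod, map_pow, map_natCast, Finset.prod_mul_distrib,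
      Finsupp.equivFunOnFinite_symm_apply_apply]
    ring
  simp only [expand, coeff_sum, coeff_monomial, Equiv.symm_apply_eq]
  rw [Finset.sum_ite_eq' _ (Finsupp.equivFunOnFinite J)]
  simp only [Fintype.mem_piFinset, Finset.mem_range, Nat.lt_succ_iff,
    Finsupp.equivFunOnFinite_apply]
  split_ifs with hJ
  · rw [Finset.prod_mul_distrib, binom, Nat.cast_prod, mul_comm (∏ h, _)]
  · rw [binom_eq_zero hJ, Nat.cast_zero, zero_mul, mul_zero]

lemma coeff_taylor (ξ : σ → R) (J : σ →₀ ℕ) (P : MvPolynomial σ R) :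
    coeff J (taylor ξ P) =
      ∑ i ∈ P.support, coeff i P * (binom i J * ∏ h, ξ h ^ (i h - J h)) := by
  conv_lhs => rw [P.as_sum]
  simp only [map_sum, coeff_sum, coeff_taylor_monomial]

/-- The Hasse derivative `∂^J / J!`, characterised on monomials by
`X ^ i ↦ (i choose J) X ^ (i - J)`. -/
def hasseDeriv (J : σ →₀ ℕ) : MvPolynomial σ R →ₗ[R] MvPolynomial σ R :=
  (basisMonomials σ R).constr R fun i => monomial (i - J) (binom i J : R)

lemma hasseDeriv_monomial (J i : σ →₀ ℕ) (a : R) :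
    hasseDeriv J (monomial i a) = monomial (i - J) (a * (binom i J : R)) := by
  have : (monomial i a : MvPolynomial σ R) = a • basisMonomials σ R i := by
    simp [coe_basisMonomials, smul_monomial]
  rw [this, map_smul, hasseDeriv, Module.Basis.constr_basis, smul_monomial, smul_eq_mul]

lemma coeff_hasseDeriv (J K : σ →₀ ℕ) (P : MvPolynomial σ R) :
    coeff K (hasseDeriv J P) = coeff (K + J) P * (binom (K + J) J : R) := by
  classical
  induction P using MvPolynomial.induction_on' with
  | monomial i a =>
    rw [hasseDeriv_monomial, coeff_monomial, coeff_monomial]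
    by_cases hJ : J ≤ i
    · simp only [tsub_eq_iff_eq_add_of_le hJ]
      split_ifs with h
      · rw [h]
      · rw [zero_mul]
    · have : i ≠ K + J := fun h => hJ (h ▸ le_add_self)
      simp [binom_eq_zero hJ, this]
  | add p q hp hq => rw [map_add, coeff_add, hp, hq, coeff_add, add_mul]

lemma map_hasseDeriv {S : Type*} [CommRing S] (f : R →+* S) (J : σ →₀ ℕ)
    (P : MvPolynomial σ R) : map f (hasseDeriv J P) = hasseDeriv J (map f P) := by
  ext K
  rw [coeff_map, coeff_hasseDeriv, coeff_hasseDeriv, coeff_map, map_mul, map_natCast]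

lemma pderiv_hasseDeriv (J : σ →₀ ℕ) (h : σ) (P : MvPolynomial σ R) :
    pderiv h (hasseDeriv J P) =
      ((J h + 1 : ℕ) : R) • hasseDeriv (J + Finsupp.single h 1) P := by
  induction P using MvPolynomial.induction_on' with
  | monomial i a =>
    rw [hasseDeriv_monomial, hasseDeriv_monomial, pderiv_monomial, smul_monomial, smul_eq_mul,
      tsub_tsub, mul_assoc, ← Nat.cast_mul, binom_mul_tsub_apply, Nat.cast_mul, mul_left_comm]
  | add p q hp hq => simp only [map_add, hp, hq, smul_add]

lemma hasseDeriv_taylor (ξ : σ → R) (J : σ →₀ ℕ) (P : MvPolynomial σ R) :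
    hasseDeriv J (taylor ξ P) = taylor ξ (hasseDeriv J P) := by
  induction P using MvPolynomial.induction_on' with
  | monomial i a =>
    ext K
    rw [coeff_hasseDeriv, hasseDeriv_monomial, coeff_taylor_monomial, coeff_taylor_monomial]
    have := congrArg (Nat.cast : ℕ → R) (binom_add_mul_binom i J K)
    push_cast at this
    simp only [Finsupp.add_apply, Finsupp.tsub_apply, Nat.sub_sub, Nat.add_comm (J _)]
    linear_combination a * (∏ h, ξ h ^ (i h - (K h + J h))) * this
  | add p q hp hq => simp only [map_add, hp, hq]

lemma eval_hasseDeriv (ξ : σ → R) (J : σ →₀ ℕ) (P : MvPolynomial σ R) :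
    eval ξ (hasseDeriv J P) = coeff J (taylor ξ P) := by
  induction P using MvPolynomial.induction_on' with
  | monomial i a =>
    rw [hasseDeriv_monomial, coeff_taylor_monomial, eval_monomial,
      Finsupp.prod_fintype _ _ fun _ => pow_zero _, mul_assoc]
    rfl
  | add p q hp hq => simp only [map_add, coeff_add, hp, hq]

lemma degreeOf_hasseDeriv_le (J : σ →₀ ℕ) (P : MvPolynomial σ R) (x : σ) :
    degreeOf x (hasseDeriv J P) ≤ degreeOf x P := by
  refine degreeOf_le_iff.2 fun K hK => ?_
  rw [mem_support_iff, coeff_hasseDeriv] at hK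
  exact (Nat.le_add_right (K x) (J x)).trans
    (degreeOf_le_iff.1 le_rfl (K + J) (mem_support_iff.2 (left_ne_zero_of_mul hK)))

end TaylorShift

/-! ### Index and size of a polynomial -/

section Det

variable {σ R ι : Type*} [CommRing R] [Fintype ι] [DecidableEq ι]

lemma degreeOf_det_le {M : Matrix ι ι (MvPolynomial σ R)} {B : ℕ} {x : σ}
    (h : ∀ i j, degreeOf x (M i j) ≤ B) : degreeOf x M.det ≤ Fintype.card ι * B := by
  rw [Matrix.det_apply]
  refine (degreeOf_sum_le _ _ _).trans (Finset.sup_le fun τ _ => ?_)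
  have sign_smul : degreeOf x (Equiv.Perm.sign τ • ∏ i, M (τ i) i) =
      degreeOf x (∏ i, M (τ i) i) := by
    rcases Int.units_eq_one_or (Equiv.Perm.sign τ) with hτ | hτ <;> simp [hτ, degreeOf]
  rw [sign_smul]
  refine (degreeOf_prod_le _ _ _).trans ?_
  simpa using Finset.sum_le_sum fun i (_ : i ∈ Finset.univ) => h (τ i) i

end Det

section Index

variable {σ R : Type*} [CommRing R]

/-- The degree `∑ₕ Kₕ / rₕ` of an exponent `K` relative to a multidegree `r`. A variable with
`rₕ = 0` contributes `0`. -/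
def relDegree (r : σ → ℕ) : (σ →₀ ℕ) →+ ℝ := Finsupp.weight fun h => (r h : ℝ)⁻¹

lemma relDegree_eq_sum_support (r : σ → ℕ) (K : σ →₀ ℕ) :
    relDegree r K = ∑ h ∈ K.support, (K h : ℝ) / r h := by
  simp [relDegree, Finsupp.weight_apply, Finsupp.sum, div_eq_mul_inv]

lemma relDegree_eq_sum [Fintype σ] (r : σ → ℕ) (K : σ →₀ ℕ) :
    relDegree r K = ∑ h, (K h : ℝ) / r h := by
  simp [relDegree, Finsupp.weight_eq_sum, div_eq_mul_inv]

/-- The index of `P` at the origin relative to `r` is at least `t`: every monomial of `P` has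
relative degree at least `t`. The index at `ξ` is the index at the origin of `taylor ξ P`. -/
def IndexAtLeast (r : σ → ℕ) (t : ℝ) (P : MvPolynomial σ R) : Prop :=
  ∀ K, coeff K P ≠ 0 → t ≤ relDegree r K

namespace IndexAtLeast

variable {r : σ → ℕ} {s t : ℝ} {P Q : MvPolynomial σ R}

lemma mul (hP : IndexAtLeast r s P) (hQ : IndexAtLeast r t Q) :
    IndexAtLeast r (s + t) (P * Q) := by
  classical
  intro K hK
  rw [coeff_mul] at hK
  obtain ⟨⟨I, J⟩, hIJ, hne⟩ := Finset.exists_ne_zero_of_sum_ne_zero hK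
  rw [← Finset.HasAntidiagonal.mem_antidiagonal.1 hIJ, map_add]
  exact add_le_add (hP I (left_ne_zero_of_mul hne)) (hQ J (right_ne_zero_of_mul hne))

lemma one : IndexAtLeast r 0 (1 : MvPolynomial σ R) := by
  classical
  intro K hK
  have : 0 = K := by
    by_contra h
    exact hK (by rw [coeff_one, if_neg h])
  rw [← this, map_zero]

lemma prod {ι : Type*} (s : Finset ι) {t : ι → ℝ} {P : ι → MvPolynomial σ R}
    (h : ∀ i ∈ s, IndexAtLeast r (t i) (P i)) :
    IndexAtLeast r (∑ i ∈ s, t i) (∏ i ∈ s, P i) := by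
  classical
  induction s using Finset.induction_on with
  | empty => exact one
  | insert a s ha ih =>
    rw [Finset.sum_insert ha, Finset.prod_insert ha]
    exact (h a (Finset.mem_insert_self _ _)).mul
      (ih fun i hi => h i (Finset.mem_insert_of_mem hi))

lemma det {ι : Type*} [Fintype ι] [DecidableEq ι] {t : ι → ℝ}
    {M : Matrix ι ι (MvPolynomial σ R)} (h : ∀ i j, IndexAtLeast r (t j) (M i j)) :
    IndexAtLeast r (∑ j, t j) M.det := by
  intro K hK
  rw [Matrix.det_apply, coeff_sum] at hK
  obtain ⟨τ, -, hτ⟩ := Finset.exists_ne_zero_of_sum_ne_zero hK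
  refine prod Finset.univ (fun j _ => h (τ j) j) K fun h0 => hτ ?_
  rcases Int.units_eq_one_or (Equiv.Perm.sign τ) with hs | hs <;> simp [hs, h0]

lemma hasseDeriv [Fintype σ] (hP : IndexAtLeast r t P) (J : σ →₀ ℕ) :
    IndexAtLeast r (t - relDegree r J) (hasseDeriv J P) := by
  intro K hK
  rw [coeff_hasseDeriv] at hK
  have := hP _ (left_ne_zero_of_mul hK)
  rw [map_add] at this
  linarith

end IndexAtLeast

end Index

section L1Norm

variable {σ : Type*}

/-- The sum of the absolute values of the coefficients of an integer polynomial. -/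
def l1Norm (P : MvPolynomial σ ℤ) : ℕ := ∑ i ∈ P.support, (coeff i P).natAbs

lemma l1Norm_eq_sum {P : MvPolynomial σ ℤ} {s : Finset (σ →₀ ℕ)} (h : P.support ⊆ s) :
    l1Norm P = ∑ i ∈ s, (coeff i P).natAbs :=
  Finset.sum_subset h fun _ _ hx => by simpa using hx

lemma l1Norm_add_le (P Q : MvPolynomial σ ℤ) : l1Norm (P + Q) ≤ l1Norm P + l1Norm Q := by
  classical
  rw [l1Norm_eq_sum (P := P) (Finset.subset_union_left (s₂ := Q.support)),
    l1Norm_eq_sum (P := Q) (Finset.subset_union_right (s₁ := P.support)),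
    l1Norm_eq_sum (support_add (p := P) (q := Q)), ← Finset.sum_add_distrib]
  exact Finset.sum_le_sum fun i _ => by simpa only [coeff_add] using Int.natAbs_add_le _ _

lemma l1Norm_sum_le {ι : Type*} (s : Finset ι) (P : ι → MvPolynomial σ ℤ) :
    l1Norm (∑ i ∈ s, P i) ≤ ∑ i ∈ s, l1Norm (P i) :=
  Finset.le_sum_of_subadditive l1Norm (by simp [l1Norm]) l1Norm_add_le s P

@[simp] lemma l1Norm_monomial (i : σ →₀ ℕ) (a : ℤ) : l1Norm (monomial i a) = a.natAbs := by
  classical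
  rw [l1Norm_eq_sum support_monomial_subset]
  simp

lemma l1Norm_neg (P : MvPolynomial σ ℤ) : l1Norm (-P) = l1Norm P := by
  simp [l1Norm]

lemma l1Norm_mul_le (P Q : MvPolynomial σ ℤ) : l1Norm (P * Q) ≤ l1Norm P * l1Norm Q := by
  have expand : P * Q = ∑ i ∈ P.support, ∑ j ∈ Q.support,
      monomial (i + j) (coeff i P * coeff j Q) := by
    conv_lhs => rw [P.as_sum, Q.as_sum, Finset.sum_mul_sum]
    simp only [monomial_mul]
  rw [expand, l1Norm.eq_def P, l1Norm.eq_def Q, Finset.sum_mul_sum]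
  refine (l1Norm_sum_le _ _).trans (Finset.sum_le_sum fun i _ => ?_)
  refine (l1Norm_sum_le _ _).trans (Finset.sum_le_sum fun j _ => ?_)
  rw [l1Norm_monomial, Int.natAbs_mul]

lemma l1Norm_prod_le {ι : Type*} (s : Finset ι) (P : ι → MvPolynomial σ ℤ) :
    l1Norm (∏ i ∈ s, P i) ≤ ∏ i ∈ s, l1Norm (P i) :=
  Finset.le_prod_of_submultiplicative l1Norm (l1Norm_monomial 0 1).le l1Norm_mul_le s P

lemma l1Norm_det_le {ι : Type*} [Fintype ι] [DecidableEq ι]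
    {M : Matrix ι ι (MvPolynomial σ ℤ)} {B : ℕ} (h : ∀ i j, l1Norm (M i j) ≤ B) :
    l1Norm M.det ≤ (Fintype.card ι).factorial * B ^ Fintype.card ι := by
  rw [Matrix.det_apply]
  refine (l1Norm_sum_le _ _).trans ?_
  have term_le : ∀ τ ∈ (Finset.univ : Finset (Equiv.Perm ι)),
      l1Norm (Equiv.Perm.sign τ • ∏ i, M (τ i) i) ≤ B ^ Fintype.card ι := by
    intro τ _
    have sign_smul : l1Norm (Equiv.Perm.sign τ • ∏ i, M (τ i) i) = l1Norm (∏ i, M (τ i) i) := by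
      rcases Int.units_eq_one_or (Equiv.Perm.sign τ) with hτ | hτ <;> simp [hτ, l1Norm_neg]
    rw [sign_smul]
    refine (l1Norm_prod_le _ _).trans ?_
    simpa using Finset.prod_le_prod' fun i (_ : i ∈ Finset.univ) => h (τ i) i
  simpa [Fintype.card_perm] using Finset.sum_le_card_nsmul _ _ _ term_le

lemma natAbs_coeff_le_l1Norm (P : MvPolynomial σ ℤ) (i : σ →₀ ℕ) :
    (coeff i P).natAbs ≤ l1Norm P := by
  by_cases hi : i ∈ P.support
  · exact Finset.single_le_sum (f := fun j => (coeff j P).natAbs) (fun _ _ => Nat.zero_le _) hi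
  · simp [notMem_support_iff.1 hi]

lemma l1Norm_pos {P : MvPolynomial σ ℤ} (hP : P ≠ 0) : 0 < l1Norm P := by
  obtain ⟨i, hi⟩ := ne_zero_iff.1 hP
  exact (Int.natAbs_pos.2 hi).trans_le (natAbs_coeff_le_l1Norm P i)

variable [Fintype σ]

lemma l1Norm_hasseDeriv_le {r : σ → ℕ} {P : MvPolynomial σ ℤ} (h : ∀ x, degreeOf x P ≤ r x)
    (J : σ →₀ ℕ) : l1Norm (hasseDeriv J P) ≤ 2 ^ (∑ x, r x) * l1Norm P := by
  have expand : hasseDeriv J P =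
      ∑ i ∈ P.support, monomial (i - J) (coeff i P * (binom i J : ℤ)) := by
    conv_lhs => rw [P.as_sum, map_sum]
    simp only [hasseDeriv_monomial]
  rw [expand, l1Norm.eq_def P, Finset.mul_sum]
  refine (l1Norm_sum_le _ _).trans (Finset.sum_le_sum fun i hi => ?_)
  rw [l1Norm_monomial, Int.natAbs_mul, mul_comm, Int.natAbs_natCast]
  exact Nat.mul_le_mul_right _ (binom_le_two_pow (fun x => degreeOf_le_iff.1 (h x) i hi) J)

end L1Norm

/-! ### Generalised Wronskians -/

lemma exists_integral_annihilator {A F ι : Type*} [CommRing A] [IsDomain A] [Field F]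
    [Algebra A F] [IsFractionRing A F] [Fintype ι] {W : Submodule F (ι → F)} {v : ι → F}
    (hv : v ∉ W) :
    ∃ c : ι → A, (∀ w ∈ W, (algebraMap A F ∘ c) ⬝ᵥ w = 0) ∧ (algebraMap A F ∘ c) ⬝ᵥ v ≠ 0 := by
  classical
  obtain ⟨f, hfv, hfW⟩ := Submodule.exists_le_ker_of_notMem hv
  obtain ⟨b, hb⟩ := IsLocalization.exist_integer_multiples_of_finite (nonZeroDivisors A)
    fun l : ι => f (Pi.single l 1)
  choose c hc using hb
  have dotProduct_eq (w : ι → F) : (algebraMap A F ∘ c) ⬝ᵥ w = algebraMap A F b * f w := by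
    conv_rhs => rw [pi_eq_sum_univ' w, map_sum, Finset.mul_sum]
    refine Finset.sum_congr rfl fun l _ => ?_
    rw [Function.comp_apply, hc, map_smul, Algebra.smul_def, smul_eq_mul]
    ring
  refine ⟨c, fun w hw => ?_, ?_⟩
  · rw [dotProduct_eq, LinearMap.mem_ker.1 (hfW hw), mul_zero]
  · rw [dotProduct_eq]
    exact mul_ne_zero (IsFractionRing.to_map_ne_zero_of_mem_nonZeroDivisors b.2) hfv

section Wronskian

variable {σ K ι : Type*} [Fintype σ] [Field K]

/-- The vector of the Hasse derivatives of order `J` of a family of polynomials, over the field of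
rational functions. -/
def jet (φ : ι → MvPolynomial σ K) (J : σ →₀ ℕ) : ι → FractionRing (MvPolynomial σ K) :=
  fun l => algebraMap _ _ (hasseDeriv J (φ l))

/-- The span over the field of rational functions of the jets of order less than `d`. -/
def jetSpan (φ : ι → MvPolynomial σ K) (d : ℕ) :
    Submodule (FractionRing (MvPolynomial σ K)) (ι → FractionRing (MvPolynomial σ K)) :=
  Submodule.span _ (jet φ '' {J | J.degree < d})

lemma jetSpan_mono (φ : ι → MvPolynomial σ K) : Monotone (jetSpan φ) := fun _ _ h =>
  Submodule.span_mono (Set.image_mono fun _ hJ => hJ.trans_le h)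

lemma jet_mem_jetSpan (φ : ι → MvPolynomial σ K) {d : ℕ} {J : σ →₀ ℕ} (h : J.degree < d) :
    jet φ J ∈ jetSpan φ d :=
  Submodule.subset_span ⟨J, h, rfl⟩

lemma dotProduct_jet_eq_zero_iff [Fintype ι] (c φ : ι → MvPolynomial σ K) (J : σ →₀ ℕ) :
    (algebraMap _ (FractionRing (MvPolynomial σ K)) ∘ c) ⬝ᵥ jet φ J = 0 ↔
      ∑ l, c l * hasseDeriv J (φ l) = 0 := by
  rw [← map_eq_zero_iff _ (IsFractionRing.injective (MvPolynomial σ K)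
    (FractionRing (MvPolynomial σ K))), map_sum]
  simp [dotProduct, jet]

lemma sum_pderiv_mul_hasseDeriv [Fintype ι] {c φ : ι → MvPolynomial σ K} {I : σ →₀ ℕ}
    (h : ∑ l, c l * hasseDeriv I (φ l) = 0) (x : σ) :
    ∑ l, pderiv x (c l) * hasseDeriv I (φ l) =
      -(((I x + 1 : ℕ) : K) • ∑ l, c l * hasseDeriv (I + Finsupp.single x 1) (φ l)) := by
  have := congrArg (pderiv x) h
  simp only [map_sum, Derivation.leibniz, pderiv_hasseDeriv, smul_eq_mul, map_zero,
    Finset.sum_add_distrib, mul_smul_comm, ← Finset.smul_sum] at this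
  simp only [mul_comm (pderiv x _)]
  linear_combination this

lemma exists_jetSpan_stable [Fintype ι] (φ : ι → MvPolynomial σ K) :
    ∃ d ≤ Fintype.card ι, jetSpan φ (d + 1) ≤ jetSpan φ d := by
  by_contra! h
  have le_finrank : ∀ d ≤ Fintype.card ι + 1,
      d ≤ Module.finrank (FractionRing (MvPolynomial σ K)) (jetSpan φ d) := by
    intro d
    induction d with
    | zero => exact fun _ => Nat.zero_le _
    | succ d ih =>
      intro hd
      have := Submodule.finrank_lt_finrank_of_lt
        ((jetSpan_mono φ (Nat.le_add_right d 1)).lt_of_not_ge (h d (by omega)))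
      have := ih (by omega)
      omega
  have := (le_finrank _ le_rfl).trans (Submodule.finrank_le _)
  rw [Module.finrank_pi] at this
  omega

variable [CharZero K]

lemma jet_add_single_mem_jetSpan [Finite ι] {φ : ι → MvPolynomial σ K} {d : ℕ}
    (stable : jetSpan φ (d + 1) ≤ jetSpan φ d) {J : σ →₀ ℕ} (hJ : jet φ J ∈ jetSpan φ d) (x : σ) :
    jet φ (J + Finsupp.single x 1) ∈ jetSpan φ d := by
  cases nonempty_fintype ι
  by_contra hnot
  obtain ⟨c, hc, hc_ne⟩ := exists_integral_annihilator (A := MvPolynomial σ K) hnot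
  have deriv_annihilates : ∀ w ∈ jetSpan φ d,
      (algebraMap _ (FractionRing (MvPolynomial σ K)) ∘ fun l => pderiv x (c l)) ⬝ᵥ w = 0 := by
    intro w hw
    induction hw using Submodule.span_induction with
    | mem w hw =>
      obtain ⟨I, hI, rfl⟩ := hw
      have rel := (dotProduct_jet_eq_zero_iff c φ I).1 (hc _ (jet_mem_jetSpan φ hI))
      have hI' : (I + Finsupp.single x 1).degree < d + 1 := by simpa using hI
      have rel' := (dotProduct_jet_eq_zero_iff c φ _).1 (hc _ (stable (jet_mem_jetSpan φ hI')))
      rw [dotProduct_jet_eq_zero_iff, sum_pderiv_mul_hasseDeriv rel, rel', smul_zero, neg_zero]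
    | zero => exact dotProduct_zero _
    | add u v _ _ hu hv => rw [dotProduct_add, hu, hv, add_zero]
    | smul a u _ hu => rw [dotProduct_smul, hu, smul_zero]
  have key := sum_pderiv_mul_hasseDeriv
    ((dotProduct_jet_eq_zero_iff c φ J).1 (hc _ hJ)) x
  rw [(dotProduct_jet_eq_zero_iff _ φ J).1 (deriv_annihilates _ hJ), zero_eq_neg,
    smul_eq_zero_iff_right (Nat.cast_ne_zero.2 (Nat.succ_ne_zero _))] at key
  exact hc_ne ((dotProduct_jet_eq_zero_iff c φ _).2 key)

lemma jet_mem_jetSpan_of_stable [Finite ι] {φ : ι → MvPolynomial σ K} {d : ℕ}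
    (stable : jetSpan φ (d + 1) ≤ jetSpan φ d) (J : σ →₀ ℕ) : jet φ J ∈ jetSpan φ d := by
  suffices ∀ I, jet φ I ∈ jetSpan φ d → jet φ (I + J) ∈ jetSpan φ d by
    simpa using this 0 (stable (jet_mem_jetSpan φ (by simp)))
  induction J using Finsupp.induction_linear with
  | zero => simp
  | add J J' hJ hJ' =>
    intro I hI
    rw [← add_assoc]
    exact hJ' _ (hJ I hI)
  | single x n =>
    intro I hI
    induction n with
    | zero => simpa using hI
    | succ n ih =>
      rw [Finsupp.single_add, ← add_assoc]
      exact jet_add_single_mem_jetSpan stable ih x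

lemma jetSpan_eq_top [Fintype ι] {φ : ι → MvPolynomial σ K} (hφ : LinearIndependent K φ) :
    jetSpan φ (Fintype.card ι) = ⊤ := by
  obtain ⟨d, hd, stable⟩ := exists_jetSpan_stable φ
  rw [Submodule.eq_top_iff']
  by_contra! h
  obtain ⟨v, hv⟩ := h
  obtain ⟨c, hc, hcv⟩ := exists_integral_annihilator (A := MvPolynomial σ K) hv
  have rel (J : σ →₀ ℕ) : ∑ l, c l * hasseDeriv J (φ l) = 0 :=
    (dotProduct_jet_eq_zero_iff c φ J).1
      (hc _ (jetSpan_mono φ hd (jet_mem_jetSpan_of_stable stable J)))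
  have c_eq_zero : c = 0 := by
    refine _root_.funext fun l => MvPolynomial.funext fun ξ => ?_
    have : ∑ l, eval ξ (c l) • φ l = 0 := by
      apply taylor_injective ξ
      ext J
      simpa [coeff_sum, eval_hasseDeriv] using congrArg (eval ξ) (rel J)
    simpa using Fintype.linearIndependent_iff.1 hφ _ this l
  simp [c_eq_zero] at hcv

theorem exists_det_hasseDeriv_ne_zero [Fintype ι] [DecidableEq ι]
    {φ : ι → MvPolynomial σ K} (hφ : LinearIndependent K φ) :
    ∃ J : ι → σ →₀ ℕ, (∀ i, (J i).degree < Fintype.card ι) ∧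
      (Matrix.of fun i l => hasseDeriv (J i) (φ l)).det ≠ 0 := by
  obtain ⟨f, f_mem, -, f_indep⟩ := Submodule.exists_fun_fin_finrank_span_eq
    (FractionRing (MvPolynomial σ K)) (jet φ '' {J | J.degree < Fintype.card ι})
  have finrank_eq : Module.finrank (FractionRing (MvPolynomial σ K))
      (Submodule.span (FractionRing (MvPolynomial σ K))
        (jet φ '' {J | J.degree < Fintype.card ι})) = Fintype.card ι := by
    rw [← jetSpan, jetSpan_eq_top hφ, finrank_top, Module.finrank_pi]
  let e : ι ≃ Fin _ := Fintype.equivFinOfCardEq finrank_eq.symm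
  choose J hJ jet_eq using fun i => f_mem (e i)
  refine ⟨J, hJ, fun hdet => ?_⟩
  have indep : LinearIndependent (FractionRing (MvPolynomial σ K))
      (Matrix.of fun i => jet φ (J i)).row := by
    have := f_indep.comp e e.injective
    rwa [show f ∘ e = fun i => jet φ (J i) from _root_.funext fun i => (jet_eq i).symm] at this
  have isUnit_det := (Matrix.isUnit_iff_isUnit_det _).1
    (Matrix.linearIndependent_rows_iff_isUnit.1 indep)
  refine isUnit_det.ne_zero ?_
  rw [← map_zero (algebraMap (MvPolynomial σ K) _), ← hdet, RingHom.map_det]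
  rfl

lemma hasseDeriv_uniqueAlgEquiv_symm {R : Type*} [CommRing R] (J : Unit →₀ ℕ)
    (p : Polynomial R) :
    hasseDeriv J ((uniqueAlgEquiv R Unit).symm p) =
      (uniqueAlgEquiv R Unit).symm (Polynomial.hasseDeriv (J ()) p) := by
  ext d
  rw [coeff_hasseDeriv, coeff_uniqueAlgEquiv_symm, coeff_uniqueAlgEquiv_symm,
    Polynomial.hasseDeriv_coeff, mul_comm]
  simp [binom]

theorem det_polynomial_hasseDeriv_ne_zero {k : ℕ} {ψ : Fin k → Polynomial K}
    (hψ : LinearIndependent K ψ) :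
    (Matrix.of fun i l : Fin k => Polynomial.hasseDeriv (i : ℕ) (ψ l)).det ≠ 0 := by
  let f := (uniqueAlgEquiv K Unit).symm
  obtain ⟨J, J_lt, det_ne⟩ := exists_det_hasseDeriv_ne_zero
    (φ := f ∘ ψ) (hψ.map' f.toLinearMap (LinearMap.ker_eq_bot.2 f.injective))
  have order_lt (i : Fin k) : J i () < k := by
    simpa [Finsupp.degree_eq_sum] using J_lt i
  let order (i : Fin k) : Fin k := ⟨J i (), order_lt i⟩
  have order_injective : Function.Injective order := by
    intro i i' h
    by_contra hne
    refine det_ne (Matrix.det_zero_of_row_eq hne ?_)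
    have : J i = J i' := Finsupp.ext fun _ => congrArg Fin.val h
    exact congrArg (fun I l => hasseDeriv I (f (ψ l))) this
  let τ := Equiv.ofBijective order (Finite.injective_iff_bijective.1 order_injective)
  intro h0
  apply det_ne
  have : (Matrix.of fun i l => hasseDeriv (J i) ((f ∘ ψ) l)) = f.toRingHom.mapMatrix
      ((Matrix.of fun i l : Fin k => Polynomial.hasseDeriv (i : ℕ) (ψ l)).submatrix τ id) := by
    ext1 i l
    exact hasseDeriv_uniqueAlgEquiv_symm (J i) (ψ l)
  rw [this, ← RingHom.map_det, Matrix.det_permute, h0, mul_zero, map_zero]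

end Wronskian

/-! ### Splitting off the first variable -/

section SplitMul

variable {R : Type*} [CommRing R] {n : ℕ}

/-- The product `φ(X₁, …, Xₙ) ψ(X₀)` of two polynomials in disjoint sets of variables. -/
def splitMul (φ : MvPolynomial (Fin n) R) (ψ : Polynomial R) : MvPolynomial (Fin (n + 1)) R :=
  rename Fin.succ φ * Polynomial.aeval (X 0) ψ

lemma finSuccEquiv_splitMul (φ : MvPolynomial (Fin n) R) (ψ : Polynomial R) :
    finSuccEquiv R n (splitMul φ ψ) = Polynomial.C φ * ψ.map C := by
  have hφ : finSuccEquiv R n (rename Fin.succ φ) = Polynomial.C φ := by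
    have : (finSuccEquiv R n).toAlgHom.comp (rename Fin.succ) = Polynomial.CAlgHom :=
      algHom_ext fun h => by simp [finSuccEquiv_X_succ]
    exact DFunLike.congr_fun this φ
  have hψ : finSuccEquiv R n (Polynomial.aeval (X 0) ψ) = ψ.map C := by
    rw [← Polynomial.aeval_algHom_apply, finSuccEquiv_X_zero, Polynomial.aeval_X_left_eq_map]
    rfl
  rw [splitMul, map_mul, hφ, hψ]

lemma coeff_splitMul (φ : MvPolynomial (Fin n) R) (ψ : Polynomial R) (j : ℕ) (J : Fin n →₀ ℕ) :
    coeff (Finsupp.cons j J) (splitMul φ ψ) = coeff J φ * ψ.coeff j := by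
  rw [← finSuccEquiv_coeff_coeff, finSuccEquiv_splitMul, Polynomial.coeff_C_mul,
    Polynomial.coeff_map, mul_comm, coeff_C_mul, mul_comm]

lemma binom_cons (i j : ℕ) (I J : Fin n →₀ ℕ) :
    binom (Finsupp.cons i I) (Finsupp.cons j J) = i.choose j * binom I J := by
  simp [binom, Fin.prod_univ_succ]

lemma hasseDeriv_splitMul (j : ℕ) (J : Fin n →₀ ℕ) (φ : MvPolynomial (Fin n) R)
    (ψ : Polynomial R) :
    hasseDeriv (Finsupp.cons j J) (splitMul φ ψ) =
      splitMul (hasseDeriv J φ) (Polynomial.hasseDeriv j ψ) := by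
  ext K
  have cons_add : (Finsupp.cons (K 0) K.tail : Fin (n + 1) →₀ ℕ) + Finsupp.cons j J =
      Finsupp.cons (K 0 + j) (K.tail + J) := by
    ext x
    refine Fin.cases ?_ (fun x => ?_) x <;> simp [Finsupp.tail_apply]
  rw [← Finsupp.cons_tail K, coeff_hasseDeriv, cons_add, coeff_splitMul, coeff_splitMul,
    coeff_hasseDeriv, Polynomial.hasseDeriv_coeff, binom_cons]
  push_cast
  ring

lemma taylor_splitMul (ξ : Fin (n + 1) → R) (φ : MvPolynomial (Fin n) R) (ψ : Polynomial R) :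
    taylor ξ (splitMul φ ψ) =
      splitMul (taylor (fun x => ξ x.succ) φ) (Polynomial.taylor (ξ 0) ψ) := by
  have hφ : taylor ξ (rename Fin.succ φ) = rename Fin.succ (taylor (fun x => ξ x.succ) φ) := by
    have : (taylor ξ).comp (rename Fin.succ) =
        (rename Fin.succ).comp (taylor fun x => ξ x.succ) :=
      algHom_ext fun h => by simp [taylor]
    exact DFunLike.congr_fun this φ
  have hψ : taylor ξ (Polynomial.aeval (X 0) ψ) =
      Polynomial.aeval (X 0) (Polynomial.taylor (ξ 0) ψ) := by
    rw [Polynomial.taylor_apply, Polynomial.aeval_comp, ← Polynomial.aeval_algHom_apply]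
    simp [taylor]
  rw [splitMul, map_mul, hφ, hψ, splitMul]

lemma relDegree_cons (r : Fin (n + 1) → ℕ) (j : ℕ) (J : Fin n →₀ ℕ) :
    relDegree r (Finsupp.cons j J) = j / r 0 + relDegree (fun x => r x.succ) J := by
  simp [relDegree_eq_sum, Fin.sum_univ_succ]

lemma l1Norm_coeff_finSuccEquiv_le (P : MvPolynomial (Fin (n + 1)) ℤ) (j : ℕ) :
    l1Norm ((finSuccEquiv ℤ n P).coeff j) ≤ l1Norm P := by
  classical
  have cons_injective : Function.Injective
      (fun J : Fin n →₀ ℕ => (Finsupp.cons j J : Fin (n + 1) →₀ ℕ)) := fun _ _ h => by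
    simpa using congrArg Finsupp.tail h
  rw [l1Norm, l1Norm]
  simp only [finSuccEquiv_coeff_coeff]
  rw [← Finset.sum_image (f := fun K => (coeff K P).natAbs) cons_injective.injOn]
  refine Finset.sum_le_sum_of_subset (Finset.image_subset_iff.2 fun J hJ => ?_)
  rwa [mem_support_iff, finSuccEquiv_coeff_coeff, ← mem_support_iff] at hJ

end SplitMul

lemma exists_linearIndependent_sum_C_mul_map {K A : Type*} [Field K] [CommRing A] [Algebra K A]
    (p : Polynomial A) :
    ∃ k ≤ p.natDegree + 1, ∃ (φ : Fin k → A) (ψ : Fin k → Polynomial K),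
      LinearIndependent K φ ∧ LinearIndependent K ψ ∧
        p = ∑ l, Polynomial.C (φ l) * (ψ l).map (algebraMap K A) := by
  let v (j : Fin (p.natDegree + 1)) : A := p.coeff j
  have := FiniteDimensional.span_of_finite K (Set.finite_range v)
  obtain ⟨φ, φ_mem, span_φ, φ_indep⟩ :=
    Submodule.exists_fun_fin_finrank_span_eq K (Set.range v)
  choose i hi using φ_mem
  have v_mem (j) : v j ∈ Submodule.span K (Set.range φ) :=
    span_φ.symm ▸ Submodule.subset_span (Set.mem_range_self j)
  choose g hg using fun j => (Submodule.mem_span_range_iff_exists_fun K).1 (v_mem j)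
  obtain ⟨ψ, coeff_ψ⟩ : ∃ ψ : Fin _ → Polynomial K, ∀ l j,
      (ψ l).coeff j = if hj : j < p.natDegree + 1 then g ⟨j, hj⟩ l else 0 := by
    refine ⟨fun l => ∑ j : Fin (p.natDegree + 1), Polynomial.monomial j (g j l), fun l j => ?_⟩
    simp only [Polynomial.finsetSum_coeff, Polynomial.coeff_monomial]
    split_ifs with hj
    · lift j to Fin (p.natDegree + 1) using hj
      simp [Fin.val_inj]
    · exact Finset.sum_eq_zero fun x _ => if_neg (by omega)
  have finrank_le : Module.finrank K (Submodule.span K (Set.range v)) ≤ p.natDegree + 1 :=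
    (finrank_range_le_card v).trans_eq (Fintype.card_fin _)
  refine ⟨_, finrank_le, φ, ψ, φ_indep, ?_, ?_⟩
  · have g_i (l l') : g (i l') l = if l' = l then 1 else 0 := by
      have : ∑ l, (g (i l') l - if l' = l then 1 else 0) • φ l = 0 := by
        simp [sub_smul, Finset.sum_sub_distrib, hg, hi]
      exact sub_eq_zero.1 (Fintype.linearIndependent_iff.1 φ_indep _ this l)
    refine Fintype.linearIndependent_iff.2 fun c hc l' => ?_
    simpa [Polynomial.finsetSum_coeff, coeff_ψ, g_i, Fin.is_le] using
      congrArg (fun q => q.coeff (i l')) hc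
  · ext j
    by_cases hj : j < p.natDegree + 1
    · simpa [coeff_ψ, hj, Algebra.smul_def, mul_comm] using (hg ⟨j, hj⟩).symm
    · simp [coeff_ψ, hj, Polynomial.coeff_eq_zero_of_natDegree_lt (not_lt.1 hj)]

lemma isPrimitive_den_mul_X_sub_num (ξ : ℚ) :
    (Polynomial.C (ξ.den : ℤ) * Polynomial.X - Polynomial.C ξ.num).IsPrimitive := by
  rw [Polynomial.isPrimitive_iff_isUnit_of_C_dvd]
  intro a ha
  rw [Polynomial.C_dvd_iff_dvd_coeff] at ha
  exact ξ.isCoprime_num_den.isUnit_of_dvd' (by simpa using ha 0)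
    (by simpa [-Polynomial.map_intCast, -eq_intCast, Polynomial.coeff_C_succ] using ha 1)

lemma den_pow_rootMultiplicity_dvd_leadingCoeff (p : Polynomial ℤ) (ξ : ℚ) :
    (ξ.den : ℤ) ^ (p.map (Int.castRingHom ℚ)).rootMultiplicity ξ ∣ p.leadingCoeff := by
  have den_ne : (ξ.den : ℤ) ≠ 0 := by exact_mod_cast ξ.den_nz
  set l := (p.map (Int.castRingHom ℚ)).rootMultiplicity ξ
  set q : Polynomial ℤ := Polynomial.C (ξ.den : ℤ) * Polynomial.X - Polynomial.C ξ.num with hq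
  have map_q : q.map (Int.castRingHom ℚ) =
      Polynomial.C (ξ.den : ℚ) * (Polynomial.X - Polynomial.C ξ) := by
    rw [hq, Polynomial.map_sub, Polynomial.map_mul, Polynomial.map_C, Polynomial.map_C,
      Polynomial.map_X, mul_sub, ← Polynomial.C_mul, Rat.den_mul_eq_num]
    rfl
  have q_pow_dvd : q ^ l ∣ p := by
    have primitive : (q ^ l).IsPrimitive := by
      induction l with
      | zero => exact (pow_zero q).symm ▸ Polynomial.isPrimitive_one
      | succ l ih => exact (pow_succ q l).symm ▸ ih.mul (isPrimitive_den_mul_X_sub_num ξ)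
    rw [Polynomial.IsPrimitive.Int.dvd_iff_map_cast_dvd_map_cast _ _ primitive,
      Polynomial.map_pow, map_q, mul_pow]
    have unit : IsUnit (Polynomial.C (ξ.den : ℚ) ^ l) :=
      (Polynomial.isUnit_C.2 (isUnit_iff_ne_zero.2 (by exact_mod_cast den_ne))).pow l
    exact unit.mul_left_dvd.2 (Polynomial.pow_rootMultiplicity_dvd _ _)
  have leadingCoeff_q : q.leadingCoeff = ξ.den := by
    rw [hq, sub_eq_add_neg, ← Polynomial.C_neg, Polynomial.leadingCoeff_linear den_ne]
  simpa [leadingCoeff_q] using Polynomial.leadingCoeff_dvd_leadingCoeff q_pow_dvd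

lemma coeff_rootMultiplicity_taylor_ne_zero {R : Type*} [CommRing R] {p : Polynomial R}
    (hp : p ≠ 0) (ξ : R) : (Polynomial.taylor ξ p).coeff (p.rootMultiplicity ξ) ≠ 0 := by
  rw [Polynomial.rootMultiplicity_eq_natTrailingDegree, ← Polynomial.taylor_apply]
  exact Polynomial.trailingCoeff_nonzero_iff_nonzero.2
    ((Polynomial.taylor_injective ξ).ne_iff' (map_zero _) |>.2 hp)

/-! ### Roth's lemma -/

section MixedWronskian

variable {R : Type*} [CommRing R] {n k : ℕ}

/-- The generalised Wronskian of `P` whose entries are differentiated `0, …, k - 1` times in the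
first variable along the rows and by `J 0, …, J (k - 1)` in the other variables along the columns.
If `P = ∑ₗ φₗ(X₁, …, Xₙ) ψₗ(X₀)`, it is the product of the Wronskians of `φ` and of `ψ`. -/
def mixedWronskian (J : Fin k → Fin n →₀ ℕ) (P : MvPolynomial (Fin (n + 1)) R) :
    MvPolynomial (Fin (n + 1)) R :=
  (Matrix.of fun i j : Fin k => hasseDeriv (Finsupp.cons (j : ℕ) (J i)) P).det

lemma map_mixedWronskian {S : Type*} [CommRing S] (f : R →+* S) (J : Fin k → Fin n →₀ ℕ)
    (P : MvPolynomial (Fin (n + 1)) R) :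
    map f (mixedWronskian J P) = mixedWronskian J (map f P) := by
  rw [mixedWronskian, RingHom.map_det, mixedWronskian]
  congr 1
  ext1 i j
  exact map_hasseDeriv f _ P

lemma taylor_mixedWronskian (ξ : Fin (n + 1) → R) (J : Fin k → Fin n →₀ ℕ)
    (P : MvPolynomial (Fin (n + 1)) R) :
    taylor ξ (mixedWronskian J P) = mixedWronskian J (taylor ξ P) := by
  rw [mixedWronskian, AlgHom.map_det, mixedWronskian]
  congr 1
  ext1 i j
  exact (hasseDeriv_taylor ξ _ P).symm

lemma degreeOf_mixedWronskian_le (J : Fin k → Fin n →₀ ℕ) (P : MvPolynomial (Fin (n + 1)) R)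
    (x : Fin (n + 1)) : degreeOf x (mixedWronskian J P) ≤ k * degreeOf x P := by
  refine (degreeOf_det_le (B := degreeOf x P) fun i j => ?_).trans_eq (by rw [Fintype.card_fin])
  exact degreeOf_hasseDeriv_le _ P x

lemma mixedWronskian_sum_splitMul (J : Fin k → Fin n →₀ ℕ) (φ : Fin k → MvPolynomial (Fin n) R)
    (ψ : Fin k → Polynomial R) :
    mixedWronskian J (∑ l, splitMul (φ l) (ψ l)) =
      splitMul (Matrix.of fun i l => hasseDeriv (J i) (φ l)).det
        (Matrix.of fun i l : Fin k => Polynomial.hasseDeriv (i : ℕ) (ψ l)).det := by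
  rw [splitMul, AlgHom.map_det, AlgHom.map_det,
    ← Matrix.det_transpose ((Polynomial.aeval _).mapMatrix _), ← Matrix.det_mul, mixedWronskian]
  congr 1
  ext1 i j
  simp only [Matrix.of_apply, map_sum, hasseDeriv_splitMul, Matrix.mul_apply,
    AlgHom.mapMatrix_apply, Matrix.map_apply, Matrix.transpose_apply]
  rfl

theorem exists_mixedWronskian_eq_splitMul {K : Type*} [Field K] [CharZero K]
    {P : MvPolynomial (Fin (n + 1)) K} (hP : P ≠ 0) :
    ∃ (k : ℕ) (J : Fin k → Fin n →₀ ℕ) (V : MvPolynomial (Fin n) K) (U : Polynomial K),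
      0 < k ∧ k ≤ degreeOf 0 P + 1 ∧ (∀ i, (J i).degree < k) ∧ V ≠ 0 ∧ U ≠ 0 ∧
        mixedWronskian J P = splitMul V U := by
  obtain ⟨k, hk, φ, ψ, hφ, hψ, sum_eq⟩ :=
    exists_linearIndependent_sum_C_mul_map (K := K) (finSuccEquiv K n P)
  have P_eq : P = ∑ l, splitMul (φ l) (ψ l) :=
    (finSuccEquiv K n).injective (by
      simpa only [map_sum, finSuccEquiv_splitMul, algebraMap_eq] using sum_eq)
  have k_pos : 0 < k := Nat.pos_of_ne_zero fun h => hP (by subst h; simpa using P_eq)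
  obtain ⟨J, hJ, wronskian_φ⟩ := exists_det_hasseDeriv_ne_zero hφ
  exact ⟨k, J, _, _, k_pos, natDegree_finSuccEquiv P ▸ hk, by simpa using hJ, wronskian_φ,
    det_polynomial_hasseDeriv_ne_zero hψ, P_eq ▸ mixedWronskian_sum_splitMul J φ ψ⟩

lemma IndexAtLeast.mixedWronskian {r : Fin (n + 1) → ℕ} {t ω : ℝ}
    {P : MvPolynomial (Fin (n + 1)) R} (hP : IndexAtLeast r t P) {J : Fin k → Fin n →₀ ℕ}
    (hJ : ∀ i, relDegree (fun x => r x.succ) (J i) ≤ ω) :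
    IndexAtLeast r (∑ j : Fin k, max 0 (t - ω - (j : ℕ) / r 0)) (mixedWronskian J P) := by
  refine IndexAtLeast.det fun i j K hK => max_le ?_ ?_
  · rw [relDegree_eq_sum]
    positivity
  · have := hP.hasseDeriv _ K hK
    rw [relDegree_cons] at this
    linarith [hJ i]

lemma l1Norm_mixedWronskian_le {r : Fin (n + 1) → ℕ} {P : MvPolynomial (Fin (n + 1)) ℤ}
    (hP : ∀ x, degreeOf x P ≤ r x) (J : Fin k → Fin n →₀ ℕ) (hk : k ≤ r 0 + 1) :
    l1Norm (mixedWronskian J P) ≤ (2 ^ (∑ x, r x) * (2 ^ (∑ x, r x) * l1Norm P)) ^ k := by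
  have k_le : k ≤ 2 ^ ∑ x, r x := calc
    k ≤ 2 ^ r 0 := hk.trans Nat.lt_two_pow_self
    _ ≤ 2 ^ ∑ x, r x :=
      Nat.pow_le_pow_right two_pos (Finset.single_le_sum (by simp) (Finset.mem_univ 0))
  have det_le : l1Norm (mixedWronskian J P) ≤
      k.factorial * (2 ^ (∑ x, r x) * l1Norm P) ^ k := by
    refine (l1Norm_det_le fun i j => ?_).trans_eq (by rw [Fintype.card_fin])
    exact l1Norm_hasseDeriv_le hP _
  rw [mul_pow]
  exact det_le.trans
    (Nat.mul_le_mul_right _ (k.factorial_le_pow.trans (Nat.pow_le_pow_left k_le k)))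

lemma log_l1Norm_mixedWronskian_le {r : Fin (n + 1) → ℕ} {P : MvPolynomial (Fin (n + 1)) ℤ}
    (hP0 : P ≠ 0) (hP : ∀ x, degreeOf x P ≤ r x) (J : Fin k → Fin n →₀ ℕ) (hk : k ≤ r 0 + 1) :
    Real.log (l1Norm (mixedWronskian J P)) ≤
      k * (Real.log (l1Norm P) + 2 * ∑ x, (r x : ℝ)) := by
  have norm_pos : (0 : ℝ) < l1Norm P := by exact_mod_cast l1Norm_pos hP0
  rcases (l1Norm (mixedWronskian J P)).eq_zero_or_pos with h0 | wronskian_pos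
  · rw [h0, Nat.cast_zero, Real.log_zero]
    positivity
  have log_le := Real.log_le_log (by exact_mod_cast wronskian_pos)
    (Nat.cast_le (α := ℝ).2 (l1Norm_mixedWronskian_le hP J hk))
  push_cast at log_le
  rw [Real.log_pow, Real.log_mul (by positivity) (by positivity),
    Real.log_mul (by positivity) (by positivity), Real.log_pow] at log_le
  refine log_le.trans (mul_le_mul_of_nonneg_left ?_ (Nat.cast_nonneg k))
  push_cast
  have sum_nonneg : (0 : ℝ) ≤ ∑ x, (r x : ℝ) := by positivity
  nlinarith [Real.log_two_lt_d9]

end MixedWronskian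

lemma relDegree_le_of_degree_le {σ : Type*} {r : σ → ℕ} {d : ℕ} {ω : ℝ} (hd : 0 < d)
    (hr : ∀ x, 0 < r x) (hω : ∀ x, d ≤ ω * r x) {J : σ →₀ ℕ} (hJ : J.degree ≤ d) (hω0 : 0 ≤ ω) :
    relDegree r J ≤ ω := by
  have d_pos : (0 : ℝ) < d := by exact_mod_cast hd
  calc relDegree r J = ∑ x ∈ J.support, (J x : ℝ) / r x := relDegree_eq_sum_support r J
    _ ≤ ∑ x ∈ J.support, (J x : ℝ) * (ω / d) := Finset.sum_le_sum fun x _ => by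
      have r_pos : (0 : ℝ) < r x := by exact_mod_cast hr x
      rw [div_eq_mul_inv, inv_eq_one_div]
      refine mul_le_mul_of_nonneg_left ?_ (Nat.cast_nonneg _)
      rw [div_le_div_iff₀ r_pos d_pos, one_mul]
      exact hω x
    _ = J.degree * (ω / d) := by
      rw [Finsupp.degree_apply, Nat.cast_sum, Finset.sum_mul]
    _ ≤ d * (ω / d) := by gcongr
    _ = ω := mul_div_cancel₀ ω d_pos.ne'

lemma relDegree_mul_left {σ : Type*} {k : ℕ} (hk : k ≠ 0) (r : σ → ℕ) (J : σ →₀ ℕ) :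
    relDegree r J = k * relDegree (fun x => k * r x) J := by
  rw [relDegree_eq_sum_support, relDegree_eq_sum_support, Finset.mul_sum]
  refine Finset.sum_congr rfl fun x _ => ?_
  push_cast
  rw [← mul_div_assoc, mul_div_mul_left _ _ (Nat.cast_ne_zero.2 hk)]

lemma mul_sq_div_eight_le_sum_max {r k : ℕ} (hr : 0 < r) (hk : k ≤ r + 1) {s : ℝ} (hs : 0 < s)
    (hs1 : s ≤ 1) : k * (s ^ 2 / 8) ≤ ∑ j : Fin k, max 0 (s - (j : ℕ) / r) := by
  have : (1 : ℝ) ≤ r := by exact_mod_cast hr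
  have k_le : (k : ℝ) ≤ r + 1 := by exact_mod_cast hk
  set T := min k (⌊s * r / 2⌋₊ + 1) with hT
  have term_ge : ∀ j ∈ Finset.range T, s / 2 ≤ max 0 (s - (j : ℝ) / r) := fun j hj => by
    have j_le_floor : j ≤ ⌊s * r / 2⌋₊ :=
      Nat.lt_succ_iff.1 ((Finset.mem_range.1 hj).trans_le (min_le_right _ _))
    have j_le : (j : ℝ) ≤ s * r / 2 :=
      (Nat.cast_le.2 j_le_floor).trans (Nat.floor_le (by positivity))
    have : (j : ℝ) / r ≤ s / 2 := by
      rw [div_le_iff₀ (by positivity)]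
      linarith
    exact (by linarith : s / 2 ≤ s - (j : ℝ) / r).trans (le_max_right _ _)
  have T_ge : k * (s / 4) ≤ T := by
    rw [hT, Nat.cast_min, le_min_iff]
    constructor
    · nlinarith [Nat.cast_nonneg (α := ℝ) k]
    · push_cast
      nlinarith [Nat.lt_floor_add_one (s * r / 2)]
  rw [Fin.sum_univ_eq_sum_range (fun j : ℕ => max 0 (s - (j : ℝ) / r))]
  calc k * (s ^ 2 / 8) = k * (s / 4) * (s / 2) := by ring
    _ ≤ T * (s / 2) := mul_le_mul_of_nonneg_right T_ge (by positivity)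
    _ ≤ ∑ j ∈ Finset.range T, max 0 (s - (j : ℝ) / r) := by
      simpa using Finset.card_nsmul_le_sum _ _ _ term_ge
    _ ≤ ∑ j ∈ Finset.range k, max 0 (s - (j : ℝ) / r) :=
      Finset.sum_le_sum_of_subset_of_nonneg (Finset.range_mono (min_le_left _ _))
        fun _ _ _ => le_max_left _ _

lemma den_pow_rootMultiplicity_le_l1Norm {n : ℕ} {W : MvPolynomial (Fin (n + 1)) ℤ}
    {V : MvPolynomial (Fin n) ℚ} {U : Polynomial ℚ} (hV : V ≠ 0) (hU : U ≠ 0)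
    (hW : map (Int.castRingHom ℚ) W = splitMul V U) (ξ : ℚ) :
    ξ.den ^ U.rootMultiplicity ξ ≤ l1Norm W := by
  obtain ⟨J, hJ⟩ := ne_zero_iff.1 hV
  have coeff_W (j : ℕ) : ((coeff (Finsupp.cons j J) W : ℤ) : ℚ) = coeff J V * U.coeff j := by
    rw [← coeff_splitMul, ← hW, coeff_map, eq_intCast]
  obtain ⟨p, hp⟩ : Polynomial.C (coeff J V) * U ∈ Polynomial.lifts (Int.castRingHom ℚ) :=
    (Polynomial.lifts_iff_coeff_lifts _).2 fun j =>
      ⟨_, (coeff_W j).trans (Polynomial.coeff_C_mul U).symm⟩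
  rw [Polynomial.coe_mapRingHom] at hp
  have coeff_p (j : ℕ) : p.coeff j = coeff (Finsupp.cons j J) W :=
    Int.cast_injective (α := ℚ) (by
      rw [coeff_W, ← Polynomial.coeff_C_mul, ← hp, Polynomial.coeff_map, eq_intCast])
  have CU_ne : Polynomial.C (coeff J V) * U ≠ 0 :=
    mul_ne_zero (Polynomial.C_ne_zero.2 hJ) hU
  have p_ne : p ≠ 0 := fun h => CU_ne (by rw [← hp, h, Polynomial.map_zero])
  have dvd := den_pow_rootMultiplicity_dvd_leadingCoeff p ξ
  rw [hp, Polynomial.rootMultiplicity_mul CU_ne, Polynomial.rootMultiplicity_C, zero_add] at dvd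
  calc ξ.den ^ U.rootMultiplicity ξ
      ≤ p.leadingCoeff.natAbs := Nat.le_of_dvd
        (Int.natAbs_pos.2 (Polynomial.leadingCoeff_ne_zero.2 p_ne))
        (by simpa [Int.natAbs_pow] using Int.natAbs_dvd_natAbs.2 dvd)
    _ ≤ l1Norm W := by
      rw [Polynomial.leadingCoeff, coeff_p]
      exact natAbs_coeff_le_l1Norm _ _

/-- The hypotheses of Roth's lemma with parameter `ω`: `P` is a nonzero polynomial of multidegree
at most `r`, the degrees `r` increase rapidly, and the denominators of `ξ` are large compared to
the coefficients of `P`. -/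
structure RothAdmissible {n : ℕ} (ω : ℝ) (r : Fin n → ℕ) (ξ : Fin n → ℚ)
    (P : MvPolynomial (Fin n) ℤ) : Prop where
  ne_zero : P ≠ 0
  pos : ∀ h, 0 < r h
  ratio : ∀ i j, i < j → (r i : ℝ) ≤ ω * r j
  degreeOf_le : ∀ h, degreeOf h P ≤ r h
  height : ∀ h, Real.log (l1Norm P) + 2 * n * ∑ x, (r x : ℝ) ≤ ω * r h * Real.log (ξ h).den

namespace RothAdmissible

variable {n k : ℕ} {ω : ℝ} {r : Fin (n + 1) → ℕ} {ξ : Fin (n + 1) → ℚ}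
  {P : MvPolynomial (Fin (n + 1)) ℤ} {J : Fin k → Fin n →₀ ℕ}

lemma indexAtLeast_mixedWronskian (h : RothAdmissible ω r ξ P) {η : ℝ} (hω : 0 ≤ ω) (hωη : ω < η)
    (hη : η ≤ 1) (hk : k ≤ r 0 + 1) (hJ : ∀ i, (J i).degree < k)
    (hP : IndexAtLeast r η (taylor ξ (map (Int.castRingHom ℚ) P))) :
    IndexAtLeast r (k * ((η - ω) ^ 2 / 8))
      (taylor ξ (map (Int.castRingHom ℚ) (mixedWronskian J P))) := by
  have relDegree_J (i : Fin k) : relDegree (fun x => r x.succ) (J i) ≤ ω := by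
    refine relDegree_le_of_degree_le (d := r 0) ?_ ?_ ?_ ?_ hω
    · exact h.pos 0
    · exact fun x => h.pos x.succ
    · exact fun x => h.ratio 0 x.succ (Fin.succ_pos x)
    · exact Nat.le_of_lt_succ ((hJ i).trans_le hk)
  rw [map_mixedWronskian, taylor_mixedWronskian]
  intro K hK
  exact (mul_sq_div_eight_le_sum_max (h.pos 0) hk (sub_pos.2 hωη) (by linarith)).trans
    (hP.mixedWronskian relDegree_J K hK)

lemma coeff_mixedWronskian (h : RothAdmissible ω r ξ P) {ω' : ℝ} (hω : ω ≤ ω') (hk : 0 < k)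
    (hkr : k ≤ r 0 + 1) {j : ℕ} (hj : (finSuccEquiv ℤ n (mixedWronskian J P)).coeff j ≠ 0) :
    RothAdmissible ω' (fun x => k * r x.succ) (fun x => ξ x.succ)
      ((finSuccEquiv ℤ n (mixedWronskian J P)).coeff j) where
  ne_zero := hj
  pos x := Nat.mul_pos hk (h.pos _)
  ratio x y hxy := by
    have := h.ratio x.succ y.succ (Fin.succ_lt_succ_iff.2 hxy)
    push_cast
    calc (k : ℝ) * r x.succ ≤ k * (ω' * r y.succ) := by gcongr; exact this.trans (by gcongr)
      _ = ω' * (k * r y.succ) := by ring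
  degreeOf_le x := (degreeOf_coeff_finSuccEquiv _ _ _).trans <|
    (degreeOf_mixedWronskian_le J P _).trans (Nat.mul_le_mul_left k (h.degreeOf_le _))
  height x := by
    have norm_le := Real.log_le_log (by exact_mod_cast l1Norm_pos hj)
      (Nat.cast_le (α := ℝ).2 (l1Norm_coeff_finSuccEquiv_le (mixedWronskian J P) j))
    have wronskian_le := log_l1Norm_mixedWronskian_le h.ne_zero h.degreeOf_le J hkr
    have height_P := h.height x.succ
    have tail_le : ∑ y : Fin n, (r y.succ : ℝ) ≤ ∑ y, (r y : ℝ) := by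
      rw [Fin.sum_univ_succ]
      linarith [Nat.cast_nonneg (α := ℝ) (r 0)]
    have ω_le : ω * r x.succ * Real.log (ξ x.succ).den ≤
        ω' * r x.succ * Real.log (ξ x.succ).den := by
      have := Real.log_natCast_nonneg (ξ x.succ).den
      gcongr
    push_cast at height_P ⊢
    rw [← Finset.mul_sum]
    calc _ ≤ k * (Real.log (l1Norm P) + 2 * ∑ y, (r y : ℝ)) + 2 * n * (k * ∑ y, (r y : ℝ)) :=
          add_le_add (norm_le.trans wronskian_le) (by gcongr)
      _ = k * (Real.log (l1Norm P) + 2 * (n + 1) * ∑ y, (r y : ℝ)) := by ring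
      _ ≤ k * (ω' * r x.succ * Real.log (ξ x.succ).den) := by gcongr; linarith
      _ = ω' * (k * r x.succ) * Real.log (ξ x.succ).den := by ring

lemma rootMultiplicity_div_le (h : RothAdmissible ω r ξ P) (hω : 0 ≤ ω) (hk : k ≤ r 0 + 1)
    {V : MvPolynomial (Fin n) ℚ} {U : Polynomial ℚ} (hV : V ≠ 0) (hU : U ≠ 0)
    (hVU : map (Int.castRingHom ℚ) (mixedWronskian J P) = splitMul V U) :
    (U.rootMultiplicity (ξ 0) : ℝ) / r 0 ≤ k * ω := by
  have r0_pos : (0 : ℝ) < r 0 := by exact_mod_cast h.pos 0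
  have log_den_le := Real.log_le_log (by positivity)
    (Nat.cast_le (α := ℝ).2 (den_pow_rootMultiplicity_le_l1Norm hV hU hVU (ξ 0)))
  have wronskian_le := log_l1Norm_mixedWronskian_le h.ne_zero h.degreeOf_le J hk
  have height_P := h.height 0
  have log_norm_nonneg := Real.log_natCast_nonneg (l1Norm P)
  have sum_pos : (0 : ℝ) < ∑ x, (r x : ℝ) := Finset.sum_pos
    (fun x _ => by exact_mod_cast h.pos x) Finset.univ_nonempty
  have two_mul_sum_le : 2 * ∑ x, (r x : ℝ) ≤ 2 * (n + 1 : ℕ) * ∑ x, (r x : ℝ) := by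
    push_cast
    nlinarith [Nat.cast_nonneg (α := ℝ) n]
  have log_den_pos : 0 < Real.log (ξ 0).den := by
    by_contra! hneg
    nlinarith [mul_nonneg hω r0_pos.le]
  push_cast at log_den_le
  rw [Real.log_pow] at log_den_le
  rw [div_le_iff₀ r0_pos, mul_assoc]
  refine le_of_mul_le_mul_right ?_ log_den_pos
  calc _ ≤ k * (Real.log (l1Norm P) + 2 * ∑ x, (r x : ℝ)) := log_den_le.trans wronskian_le
    _ ≤ k * (ω * r 0 * Real.log (ξ 0).den) := by gcongr; linarith
    _ = _ := by ring

end RothAdmissible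

/-- The index of `P` at the origin relative to `r` is at most `η`: some monomial of `P` has relative
degree at most `η`. Roth's lemma asserts this of the Taylor shift `taylor ξ P`. -/
def IndexAtMost {σ R : Type*} [CommRing R] (r : σ → ℕ) (η : ℝ) (P : MvPolynomial σ R) : Prop :=
  ∃ J, relDegree r J ≤ η ∧ coeff J P ≠ 0

lemma RothAdmissible.indexAtMost_succ {n : ℕ} {η ω ω' : ℝ} (hη : 0 < η) (hη1 : η ≤ 1)
    (hω : 0 < ω) (hωη : ω ≤ η ^ 2 / 64) (hωω' : ω ≤ ω')
    (ih : ∀ (r : Fin n → ℕ) ξ P, RothAdmissible ω' r ξ P →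
      IndexAtMost r (η ^ 2 / 64) (taylor ξ (map (Int.castRingHom ℚ) P)))
    {r : Fin (n + 1) → ℕ} {ξ : Fin (n + 1) → ℚ} {P : MvPolynomial (Fin (n + 1)) ℤ}
    (h : RothAdmissible ω r ξ P) :
    IndexAtMost r η (taylor ξ (map (Int.castRingHom ℚ) P)) := by
  by_contra hP
  have index_ge : IndexAtLeast r η (taylor ξ (map (Int.castRingHom ℚ) P)) := fun K hK =>
    le_of_not_ge fun hle => hP ⟨K, hle, hK⟩
  have map_ne : map (Int.castRingHom ℚ) P ≠ 0 :=
    (map_injective _ (Int.castRingHom ℚ).injective_int).ne_iff' (map_zero _) |>.2 h.ne_zero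
  obtain ⟨k, J, V, U, k_pos, k_le, hJ, hV, hU, wronskian_eq⟩ :=
    exists_mixedWronskian_eq_splitMul map_ne
  replace k_le : k ≤ r 0 + 1 := k_le.trans <| Nat.succ_le_succ <|
    degreeOf_le_iff.2 fun K hK => degreeOf_le_iff.1 (h.degreeOf_le 0) K (support_map_subset _ _ hK)
  rw [← map_mixedWronskian] at wronskian_eq
  obtain ⟨u, hu⟩ : ∃ u, U.coeff u ≠ 0 := ⟨_, Polynomial.leadingCoeff_ne_zero.2 hU⟩
  have map_tail : map (Int.castRingHom ℚ) ((finSuccEquiv ℤ n (mixedWronskian J P)).coeff u) =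
      U.coeff u • V := by
    ext I
    rw [coeff_map, finSuccEquiv_coeff_coeff, ← coeff_map, wronskian_eq, coeff_splitMul,
      coeff_smul, smul_eq_mul, mul_comm]
  obtain ⟨I, hI, hI_ne⟩ := ih _ _ _ (h.coeff_mixedWronskian (J := J) (j := u) hωω' k_pos k_le
    fun h0 => smul_ne_zero hu hV (by rw [← map_tail, h0, map_zero]))
  rw [map_tail, map_smul, coeff_smul] at hI_ne
  have coeff_ne : coeff (Finsupp.cons (U.rootMultiplicity (ξ 0)) I)
      (taylor ξ (map (Int.castRingHom ℚ) (mixedWronskian J P))) ≠ 0 := by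
    rw [wronskian_eq, taylor_splitMul, coeff_splitMul]
    exact mul_ne_zero (right_ne_zero_of_mul hI_ne) (coeff_rootMultiplicity_taylor_ne_zero hU _)
  have ω_le : ω ≤ η / 64 := by nlinarith
  have lower := h.indexAtLeast_mixedWronskian hω.le (by linarith) hη1 k_le hJ index_ge _ coeff_ne
  rw [relDegree_cons, relDegree_mul_left k_pos.ne'] at lower
  have upper : (k : ℝ) * ((η - ω) ^ 2 / 8) ≤ k * (ω + η ^ 2 / 64) := by
    rw [mul_add]
    exact lower.trans (add_le_add (h.rootMultiplicity_div_le hω.le k_le hV hU wronskian_eq)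
      (by gcongr))
  nlinarith [le_of_mul_le_mul_left upper (Nat.cast_pos.2 k_pos)]

theorem exists_forall_rothAdmissible_indexAtMost (n : ℕ) {η : ℝ} (hη : 0 < η) (hη1 : η ≤ 1) :
    ∃ ω > 0, ∀ (r : Fin n → ℕ) (ξ : Fin n → ℚ) (P : MvPolynomial (Fin n) ℤ),
      RothAdmissible ω r ξ P → IndexAtMost r η (taylor ξ (map (Int.castRingHom ℚ) P)) := by
  induction n generalizing η with
  | zero =>
    refine ⟨1, one_pos, fun r ξ P h => ?_⟩
    have : taylor ξ (map (Int.castRingHom ℚ) P) ≠ 0 :=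
      ((taylor_injective ξ).comp (map_injective _ (Int.castRingHom ℚ).injective_int)).ne_iff'
        (by simp) |>.2 h.ne_zero
    obtain ⟨J, hJ⟩ := ne_zero_iff.1 this
    exact ⟨J, by simpa [relDegree_eq_sum] using hη.le, hJ⟩
  | succ n ih =>
    obtain ⟨ω', ω'_pos, hω'⟩ := ih (η := η ^ 2 / 64) (by positivity) (by nlinarith)
    exact ⟨min ω' (η ^ 2 / 64), lt_min ω'_pos (by positivity), fun r ξ P h =>
      h.indexAtMost_succ hη hη1 (lt_min ω'_pos (by positivity)) (min_le_right _ _)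
        (min_le_left _ _) hω'⟩

/-! ### The auxiliary polynomial -/

section Box

open Finset

variable {σ : Type*} [Fintype σ]

/-- The exponents of the monomials of multidegree at most `r`. -/
def box (r : σ → ℕ) : Finset (σ →₀ ℕ) :=
  open scoped Classical in
  (Fintype.piFinset fun h => range (r h + 1)).map Finsupp.equivFunOnFinite.symm.toEmbedding

lemma mem_box {r : σ → ℕ} {i : σ →₀ ℕ} : i ∈ box r ↔ ∀ h, i h ≤ r h := by
  simp [box]

lemma card_box (r : σ → ℕ) : #(box r) = ∏ h, (r h + 1) := by
  simp [box, Fintype.card_piFinset]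

lemma card_box_le_two_pow (r : σ → ℕ) : #(box r) ≤ 2 ^ ∑ h, r h := by
  rw [card_box, ← prod_pow_eq_pow_sum]
  exact prod_le_prod' fun h _ => Nat.lt_two_pow_self

lemma sum_range_exp_mul_le {r : ℕ} (hr : 0 < r) (l : ℝ) :
    ∑ j ∈ range (r + 1), Real.exp (l * (j / r - 1 / 2)) ≤ (r + 1) * Real.exp (l ^ 2 / 8) := by
  have hr' : (0 : ℝ) < r := Nat.cast_pos.2 hr
  have reflect : ∑ j ∈ range (r + 1), Real.exp (-(l * (j / r - 1 / 2))) =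
      ∑ j ∈ range (r + 1), Real.exp (l * (j / r - 1 / 2)) := by
    rw [← sum_range_reflect]
    refine sum_congr rfl fun j hj => ?_
    rw [add_tsub_cancel_right, Nat.cast_sub (Nat.lt_succ_iff.1 (mem_range.1 hj))]
    congr 1
    field_simp
    ring
  calc ∑ j ∈ range (r + 1), Real.exp (l * (j / r - 1 / 2))
      = ∑ j ∈ range (r + 1), Real.cosh (l * (j / r - 1 / 2)) := by
        simp only [Real.cosh_eq]
        rw [← sum_div, sum_add_distrib, reflect]
        ring
    _ ≤ ∑ j ∈ range (r + 1), Real.exp (l ^ 2 / 8) := by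
        refine sum_le_sum fun j hj => (Real.cosh_le_exp_half_sq _).trans (Real.exp_le_exp.2 ?_)
        have nonneg : 0 ≤ (j : ℝ) / r := by positivity
        have le_one : (j : ℝ) / r ≤ 1 :=
          (div_le_one hr').2 (Nat.cast_le.2 (Nat.lt_succ_iff.1 (mem_range.1 hj)))
        have : ((j : ℝ) / r - 1 / 2) ^ 2 ≤ 1 / 4 := by nlinarith
        rw [mul_pow]
        nlinarith [sq_nonneg l]
    _ = (r + 1) * Real.exp (l ^ 2 / 8) := by simp

lemma relDegree_sub_half_card (r : σ → ℕ) (i : σ →₀ ℕ) :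
    relDegree r i - Fintype.card σ / 2 = ∑ h, ((i h : ℝ) / r h - 1 / 2) := by
  simp [relDegree_eq_sum, div_eq_mul_inv]

lemma sum_box_exp_mul_le {r : σ → ℕ} (hr : ∀ h, 0 < r h) (l : ℝ) :
    ∑ i ∈ box r, Real.exp (l * (relDegree r i - Fintype.card σ / 2)) ≤
      #(box r) * Real.exp (Fintype.card σ * (l ^ 2 / 8)) := by
  classical
  calc ∑ i ∈ box r, Real.exp (l * (relDegree r i - Fintype.card σ / 2))
      = ∏ h, ∑ j ∈ range (r h + 1), Real.exp (l * (j / r h - 1 / 2)) := by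
        simp only [relDegree_sub_half_card, mul_sum, Real.exp_sum, box, sum_map, prod_univ_sum]
        rfl
    _ ≤ ∏ h, ((r h + 1) * Real.exp (l ^ 2 / 8)) :=
        prod_le_prod (fun _ _ => by positivity) fun h _ => sum_range_exp_mul_le (hr h) l
    _ = #(box r) * Real.exp (Fintype.card σ * (l ^ 2 / 8)) := by
        simp [prod_mul_distrib, card_box, Real.exp_nat_mul]

/-- The Chernoff bound for the sum of independent uniform variables `iₕ / rₕ`, with parameter
`l = 4ε` or `l = -4ε` according to the sign `s`. -/
lemma four_mul_card_tail_le {r : σ → ℕ} (hr : ∀ h, 0 < r h) {s ε : ℝ} (hs : s ^ 2 = 1)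
    (hε : 0 < ε) (hcard : 1 ≤ ε ^ 2 * Fintype.card σ) :
    4 * #{i ∈ box r | ε * Fintype.card σ ≤ s * (relDegree r i - Fintype.card σ / 2)} ≤
      #(box r) := by
  set m := (Fintype.card σ : ℝ)
  set T := {i ∈ box r | ε * m ≤ s * (relDegree r i - m / 2)}
  have markov : #T * (Real.exp (2 * (ε ^ 2 * m)) * Real.exp (2 * (ε ^ 2 * m))) ≤
      #(box r) * Real.exp (2 * (ε ^ 2 * m)) :=
    calc #T * (Real.exp (2 * (ε ^ 2 * m)) * Real.exp (2 * (ε ^ 2 * m)))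
        = ∑ i ∈ T, Real.exp (4 * ε * (ε * m)) := by
          rw [sum_const, nsmul_eq_mul, ← Real.exp_add]
          ring_nf
      _ ≤ ∑ i ∈ T, Real.exp (4 * ε * s * (relDegree r i - m / 2)) := by
          refine sum_le_sum fun i hi => Real.exp_le_exp.2 ?_
          rw [mul_assoc (4 * ε)]
          exact mul_le_mul_of_nonneg_left (mem_filter.1 hi).2 (by positivity)
      _ ≤ ∑ i ∈ box r, Real.exp (4 * ε * s * (relDegree r i - m / 2)) :=
          sum_le_sum_of_subset_of_nonneg (filter_subset _ _) fun _ _ _ => by positivity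
      _ ≤ #(box r) * Real.exp (m * ((4 * ε * s) ^ 2 / 8)) := sum_box_exp_mul_le hr _
      _ = #(box r) * Real.exp (2 * (ε ^ 2 * m)) := by
          rw [mul_pow, hs]
          ring_nf
  have four_le : 4 ≤ Real.exp (2 * (ε ^ 2 * m)) := by
    have two_le : 2 ≤ Real.exp (ε ^ 2 * m) := by
      linarith [Real.add_one_le_exp (ε ^ 2 * m)]
    rw [two_mul, Real.exp_add]
    nlinarith
  rw [← mul_assoc] at markov
  have := le_of_mul_le_mul_right markov (Real.exp_pos _)
  have : (4 * #T : ℝ) ≤ #(box r) := by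
    nlinarith [mul_le_mul_of_nonneg_left four_le (Nat.cast_nonneg (α := ℝ) #T)]
  exact_mod_cast this

lemma two_mul_card_lower_tail_le_card_middle {r : σ → ℕ} (hr : ∀ h, 0 < r h) {ε : ℝ}
    (hε : 0 < ε) (hcard : 1 ≤ ε ^ 2 * Fintype.card σ) :
    2 * #{i ∈ box r | ε * Fintype.card σ ≤ -1 * (relDegree r i - Fintype.card σ / 2)} ≤
      #{i ∈ box r | |relDegree r i - Fintype.card σ / 2| < ε * Fintype.card σ} := by
  classical
  set m := (Fintype.card σ : ℝ)
  have upper := four_mul_card_tail_le hr (s := 1) (by norm_num) hε hcard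
  have lower := four_mul_card_tail_le hr (s := -1) (by norm_num) hε hcard
  have middle_compl : {i ∈ box r | ¬ |relDegree r i - m / 2| < ε * m} ⊆
      {i ∈ box r | ε * m ≤ 1 * (relDegree r i - m / 2)} ∪
        {i ∈ box r | ε * m ≤ -1 * (relDegree r i - m / 2)} := by
    intro i hi
    simpa only [mem_union, mem_filter, not_lt, le_abs, one_mul, neg_one_mul, ← and_or_left]
      using hi
  have := (card_le_card middle_compl).trans (card_union_le _ _)
  have := card_filter_add_card_filter_not (s := box r)
    fun i => |relDegree r i - m / 2| < ε * m
  lia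

end Box

section Siegel

attribute [local instance] Matrix.seminormedAddCommGroup

lemma exists_ne_zero_mulVec_eq_zero_natAbs_le {α β : Type*} [Fintype α] [Fintype β] [Nonempty α]
    (A : Matrix α β ℤ) {B : ℕ} (hB : 0 < B) (hA : ∀ i j, (A i j).natAbs ≤ B)
    (hcard : 2 * Fintype.card α ≤ Fintype.card β) :
    ∃ t : β → ℤ, t ≠ 0 ∧ A.mulVec t = 0 ∧ ∀ j, (t j).natAbs ≤ Fintype.card β * B := by
  classical
  have card_pos : 0 < Fintype.card α := Fintype.card_pos
  obtain ⟨t, t_ne, mulVec_eq, norm_le⟩ :=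
    Int.Matrix.exists_ne_zero_int_vec_norm_le A (by lia) card_pos
  refine ⟨t, t_ne, mulVec_eq, fun j => ?_⟩
  have norm_A : ‖A‖ ≤ B := by
    rw [Matrix.norm_le_iff (by positivity)]
    intro i j
    rw [Int.norm_eq_abs, ← Int.cast_abs, Int.abs_eq_natAbs]
    exact_mod_cast hA i j
  have max_le : max 1 ‖A‖ ≤ B := max_le (by exact_mod_cast hB) norm_A
  have one_le : 1 ≤ (Fintype.card β : ℝ) * max 1 ‖A‖ :=
    one_le_mul_of_one_le_of_one_le (by exact_mod_cast (by lia : 1 ≤ Fintype.card β))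
      (le_max_left _ _)
  have card_le : 2 * (Fintype.card α : ℝ) ≤ Fintype.card β := by exact_mod_cast hcard
  have exponent_le : (Fintype.card α : ℝ) / (Fintype.card β - Fintype.card α) ≤ 1 := by
    have : (0 : ℝ) < Fintype.card α := Nat.cast_pos.2 card_pos
    rw [div_le_one (by linarith)]
    linarith
  have norm_tj : ‖t j‖ ≤ Fintype.card β * B :=
    calc ‖t j‖ ≤ ‖t‖ := norm_le_pi_norm t j
      _ ≤ (Fintype.card β * max 1 ‖A‖) ^ (1 : ℝ) :=
        norm_le.trans (Real.rpow_le_rpow_of_exponent_le one_le exponent_le)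
      _ ≤ Fintype.card β * B := by
        rw [Real.rpow_one]
        gcongr
  rw [Int.norm_eq_abs, ← Int.cast_abs, Int.abs_eq_natAbs] at norm_tj
  exact_mod_cast norm_tj

end Siegel

lemma le_of_coeff_taylor_ne_zero {σ R : Type*} [Finite σ] [CommRing R] {r : σ → ℕ}
    {P : MvPolynomial σ R} (hP : ∀ x, degreeOf x P ≤ r x) {ξ : σ → R} {K : σ →₀ ℕ}
    (hK : coeff K (taylor ξ P) ≠ 0) (x : σ) : K x ≤ r x := by
  cases nonempty_fintype σ
  rw [coeff_taylor] at hK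
  obtain ⟨i, hi, term_ne⟩ := Finset.exists_ne_zero_of_sum_ne_zero hK
  have : K ≤ i := by
    by_contra h
    simp [binom_eq_zero h] at term_ne
  exact (this x).trans (degreeOf_le_iff.1 (hP x) i hi)

section Auxiliary

variable {σ : Type*} [Fintype σ]

lemma coeff_taylor_one_monomial {R : Type*} [CommRing R] (i J : σ →₀ ℕ) (a : R) :
    coeff J (taylor 1 (monomial i a)) = a * binom i J := by
  simp [coeff_taylor_monomial]

lemma exists_support_subset_coeff_taylor_one_eq_zero {r : σ → ℕ} {L W : Finset (σ →₀ ℕ)}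
    (hL : L.Nonempty) (hW : W ⊆ box r) (hcard : 2 * L.card ≤ W.card) :
    ∃ P : MvPolynomial σ ℤ, P ≠ 0 ∧ P.support ⊆ W ∧ (∀ K ∈ L, coeff K (taylor 1 P) = 0) ∧
      ∀ i, (coeff i P).natAbs ≤ W.card * 2 ^ ∑ h, r h := by
  classical
  have : Nonempty L := hL.to_subtype
  obtain ⟨t, t_ne, mulVec_eq, t_le⟩ := exists_ne_zero_mulVec_eq_zero_natAbs_le
    (Matrix.of fun (K : L) (i : W) => (binom i.1 K.1 : ℤ)) (B := 2 ^ ∑ h, r h) (by positivity)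
    (fun K i => binom_le_two_pow (mem_box.1 (hW i.2)) K) (by simpa using hcard)
  rw [Fintype.card_coe] at t_le
  set P : MvPolynomial σ ℤ := ∑ i : W, monomial i.1 (t i)
  have coeff_P (i : W) : coeff i.1 P = t i := by
    simp [P, coeff_sum, coeff_monomial]
  have coeff_P_eq_zero {i} (hi : i ∉ W) : coeff i P = 0 := by
    simp only [P, coeff_sum, coeff_monomial]
    exact Finset.sum_eq_zero fun j _ => if_neg fun (h : j.1 = i) => hi (h ▸ j.2)
  refine ⟨P, ?_, fun i hi => ?_, fun K hK => ?_, fun i => ?_⟩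
  · rintro P_eq
    exact t_ne (funext fun i => by rw [← coeff_P, P_eq, coeff_zero, Pi.zero_apply])
  · by_contra h
    exact mem_support_iff.1 hi (coeff_P_eq_zero h)
  · simpa [P, coeff_sum, coeff_taylor_one_monomial, Matrix.mulVec, dotProduct, mul_comm]
      using congrFun mulVec_eq ⟨K, hK⟩
  · by_cases hi : i ∈ W
    · exact (congrArg Int.natAbs (coeff_P ⟨i, hi⟩)).trans_le (t_le ⟨i, hi⟩)
    · simp [coeff_P_eq_zero hi]

/-- The auxiliary polynomials of the argument: of multidegree at most `r` and controlled height,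
all their monomials have nearly half the maximal relative degree, and they vanish at `(1, …, 1)`
to nearly the same order. -/
structure IsAuxiliary (r : σ → ℕ) (ε : ℝ) (P : MvPolynomial σ ℤ) : Prop where
  ne_zero : P ≠ 0
  degreeOf_le : ∀ h, degreeOf h P ≤ r h
  le_relDegree : ∀ i ∈ P.support, (1 / 2 - ε) * Fintype.card σ ≤ relDegree r i
  relDegree_le : ∀ i ∈ P.support, relDegree r i ≤ (1 / 2 + ε) * Fintype.card σ
  index : IndexAtLeast r ((1 / 2 - ε) * Fintype.card σ) (taylor 1 P)
  l1Norm_le : l1Norm P ≤ 8 ^ ∑ h, r h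

theorem exists_isAuxiliary {r : σ → ℕ} (hr : ∀ h, 0 < r h) {ε : ℝ} (hε : 0 < ε)
    (hε' : ε ≤ 1 / 2) (hcard : 1 ≤ ε ^ 2 * Fintype.card σ) : ∃ P, IsAuxiliary r ε P := by
  set m := (Fintype.card σ : ℝ)
  obtain ⟨P, P_ne, support_subset, coeff_eq_zero, coeff_le⟩ :=
    exists_support_subset_coeff_taylor_one_eq_zero
      ⟨0, Finset.mem_filter.2 ⟨mem_box.2 fun _ => Nat.zero_le _, by
        rw [map_zero]
        nlinarith [Nat.cast_nonneg (α := ℝ) (Fintype.card σ)]⟩⟩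
      (Finset.filter_subset _ _) (two_mul_card_lower_tail_le_card_middle hr hε hcard)
  have mem_middle {i} (hi : i ∈ P.support) := Finset.mem_filter.1 (support_subset hi)
  have degreeOf_le (h) : degreeOf h P ≤ r h :=
    degreeOf_le_iff.2 fun i hi => mem_box.1 (mem_middle hi).1 h
  refine ⟨P, P_ne, degreeOf_le, fun i hi => ?_, fun i hi => ?_, fun K hK => ?_, ?_⟩
  · linarith [(abs_lt.1 (mem_middle hi).2).1]
  · linarith [(abs_lt.1 (mem_middle hi).2).2]
  · by_contra! hlt
    exact hK (coeff_eq_zero K (Finset.mem_filter.2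
      ⟨mem_box.2 (le_of_coeff_taylor_ne_zero degreeOf_le hK), by linarith⟩))
  · have card_le := (Finset.card_filter_le (box r) fun i => |relDegree r i - m / 2| < ε * m).trans
      (card_box_le_two_pow r)
    rw [l1Norm_eq_sum support_subset]
    refine (Finset.sum_le_card_nsmul _ _ _ fun i _ => coeff_le i).trans ?_
    calc _ ≤ 2 ^ (∑ h, r h) * (2 ^ (∑ h, r h) * 2 ^ ∑ h, r h) := by
          rw [smul_eq_mul]
          gcongr
      _ = 8 ^ ∑ h, r h := by rw [← mul_pow, ← mul_pow]; norm_num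

end Auxiliary

/-! ### Arithmetic lower bound against analytic upper bound -/

section Comparison

variable {σ : Type*}

lemma cast_coeff_taylor_map (ξ : σ → ℚ) (J : σ →₀ ℕ) (P : MvPolynomial σ ℤ) :
    ((coeff J (taylor ξ (map (Int.castRingHom ℚ) P)) : ℚ) : ℝ) =
      coeff J (taylor (fun h => (ξ h : ℝ) - 1) (map (Int.castRingHom ℝ) (taylor 1 P))) := by
  rw [map_taylor, taylor_taylor, ← Rat.coe_castHom, ← coeff_map, map_taylor, map_map]
  congr 2
  · congr 1
    ext h
    simp

variable [Fintype σ]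

lemma l1Norm_taylor_one_monomial_le (i : σ →₀ ℕ) (a : ℤ) :
    l1Norm (taylor 1 (monomial i a)) ≤ 2 ^ (∑ h, i h) * a.natAbs := by
  have expand : taylor 1 (monomial i a) = (∏ h, (X h + 1) ^ i h) * monomial 0 a := by
    rw [monomial_eq, Finsupp.prod_fintype _ _ (by simp), map_mul, map_prod, mul_comm]
    simp [taylor]
  have l1Norm_X_add_one (h : σ) : l1Norm (X h + 1 : MvPolynomial σ ℤ) ≤ 2 :=
    (l1Norm_add_le _ _).trans (by
      rw [X, ← C_1, C_apply, l1Norm_monomial, l1Norm_monomial]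
      decide)
  rw [expand]
  refine (l1Norm_mul_le _ _).trans ?_
  rw [l1Norm_monomial, ← Finset.prod_pow_eq_pow_sum]
  gcongr
  refine (l1Norm_prod_le _ _).trans (Finset.prod_le_prod' fun h _ => ?_)
  rw [← Finset.card_range (i h), ← Finset.prod_const, ← Finset.prod_const]
  exact (l1Norm_prod_le _ _).trans (Finset.prod_le_prod' fun _ _ => l1Norm_X_add_one h)

lemma l1Norm_taylor_one_le {r : σ → ℕ} {P : MvPolynomial σ ℤ} (hP : ∀ x, degreeOf x P ≤ r x) :
    l1Norm (taylor 1 P) ≤ 2 ^ (∑ x, r x) * l1Norm P := by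
  conv_lhs => rw [P.as_sum, map_sum]
  refine (l1Norm_sum_le _ _).trans ?_
  rw [l1Norm.eq_def P, Finset.mul_sum]
  refine Finset.sum_le_sum fun i hi => (l1Norm_taylor_one_monomial_le _ _).trans ?_
  gcongr with x
  · exact one_le_two
  · exact degreeOf_le_iff.1 (hP x) i hi

/-- The numerator over `∏ₕ yₕ ^ (rₕ - Jₕ)` of the `J`-th Taylor coefficient at `x / y` of an
integral polynomial of multidegree at most `r`. -/
def taylorNumerator (r : σ → ℕ) (J : σ →₀ ℕ) (x y : σ → ℤ) (P : MvPolynomial σ ℤ) : ℤ :=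
  ∑ i ∈ P.support, coeff i P * (binom i J * ∏ h, x h ^ (i h - J h) * y h ^ (r h - i h))

lemma cast_taylorNumerator {r : σ → ℕ} {P : MvPolynomial σ ℤ} (hP : ∀ x, degreeOf x P ≤ r x)
    (J : σ →₀ ℕ) (x : σ → ℤ) {y : σ → ℤ} (hy : ∀ h, y h ≠ 0) :
    (taylorNumerator r J x y P : ℚ) = (∏ h, (y h : ℚ) ^ (r h - J h)) *
      coeff J (taylor (fun h => (x h / y h : ℚ)) (map (Int.castRingHom ℚ) P)) := by
  rw [coeff_taylor, support_map_of_injective _ (Int.castRingHom ℚ).injective_int,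
    taylorNumerator, Finset.mul_sum]
  push_cast
  refine Finset.sum_congr rfl fun i hi => ?_
  by_cases hJi : J ≤ i
  · have monomial_eq : ∏ h, ((x h : ℚ) ^ (i h - J h) * (y h : ℚ) ^ (r h - i h)) =
        (∏ h, (y h : ℚ) ^ (r h - J h)) * ∏ h, (x h / y h : ℚ) ^ (i h - J h) := by
      rw [← Finset.prod_mul_distrib]
      refine Finset.prod_congr rfl fun h _ => ?_
      have hy' : (y h : ℚ) ≠ 0 := Int.cast_ne_zero.2 (hy h)
      rw [← tsub_add_tsub_cancel (degreeOf_le_iff.1 (hP h) i hi) (hJi h), pow_add, div_pow]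
      field_simp
    rw [monomial_eq, coeff_map, eq_intCast]
    ring
  · simp [binom_eq_zero hJi]

lemma pow_dvd_taylorNumerator {r n : σ → ℕ} {J : σ →₀ ℕ} {a b : ℤ} {y : σ → ℤ}
    {P : MvPolynomial σ ℤ} {s : ℕ} (hy : ∀ h, b ^ n h ∣ y h)
    (hJ : ∀ i ∈ P.support, s ≤ ∑ h, n h * (i h - J h))
    (hr : ∀ i ∈ P.support, s ≤ ∑ h, n h * (r h - i h)) :
    (a * b) ^ s ∣ taylorNumerator r J (fun h => a ^ n h) y P := by
  refine Finset.dvd_sum fun i hi => Dvd.dvd.mul_left (Dvd.dvd.mul_left ?_ _) _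
  rw [Finset.prod_mul_distrib, mul_pow]
  refine mul_dvd_mul ((pow_dvd_pow a (hJ i hi)).trans ?_) ((pow_dvd_pow b (hr i hi)).trans ?_)
  · simp only [← Finset.prod_pow_eq_pow_sum, pow_mul, dvd_refl]
  · simp only [← Finset.prod_pow_eq_pow_sum, pow_mul]
    exact Finset.prod_dvd_prod_of_dvd _ _ fun h _ => pow_dvd_pow_of_dvd (hy h) _

lemma abs_coeff_taylor_le {r n : σ → ℕ} {J : σ →₀ ℕ} {Q : MvPolynomial σ ℤ} {s : ℕ} {ρ : ℝ}
    {δ : σ → ℝ} (hρ : 0 ≤ ρ) (hρ1 : ρ ≤ 1) (hδ : ∀ h, |δ h| ≤ 2 * ρ ^ n h)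
    (hr : ∀ K ∈ Q.support, ∀ h, K h ≤ r h) (hJ : ∀ K ∈ Q.support, s ≤ ∑ h, n h * (K h - J h)) :
    |coeff J (taylor δ (map (Int.castRingHom ℝ) Q))| ≤ l1Norm Q * (4 ^ (∑ h, r h) * ρ ^ s) := by
  rw [coeff_taylor, support_map_of_injective _ (Int.castRingHom ℝ).injective_int, l1Norm,
    Nat.cast_sum, Finset.sum_mul]
  refine (Finset.abs_sum_le_sum_abs _ _).trans (Finset.sum_le_sum fun K hK => ?_)
  rw [coeff_map, eq_intCast, abs_mul, Nat.cast_natAbs, Int.cast_abs]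
  gcongr
  have binom_le : (binom K J : ℝ) ≤ 2 ^ ∑ h, r h := by
    exact_mod_cast binom_le_two_pow (hr K hK) J
  have prod_le : |∏ h, δ h ^ (K h - J h)| ≤ 2 ^ (∑ h, r h) * ρ ^ s :=
    calc |∏ h, δ h ^ (K h - J h)| ≤ ∏ h, (2 ^ r h * ρ ^ (n h * (K h - J h))) := by
          rw [Finset.abs_prod]
          refine Finset.prod_le_prod (fun _ _ => abs_nonneg _) fun h _ => ?_
          rw [abs_pow, pow_mul]
          refine (pow_le_pow_left₀ (abs_nonneg _) (hδ h) _).trans ?_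
          rw [mul_pow]
          gcongr
          · exact one_le_two
          · exact (Nat.sub_le _ _).trans (hr K hK h)
      _ = 2 ^ (∑ h, r h) * ρ ^ ∑ h, n h * (K h - J h) := by
          rw [Finset.prod_mul_distrib, Finset.prod_pow_eq_pow_sum, Finset.prod_pow_eq_pow_sum]
      _ ≤ 2 ^ (∑ h, r h) * ρ ^ s := by
          gcongr ?_ * ?_
          exact pow_le_pow_of_le_one hρ hρ1 (hJ K hK)
  calc |(binom K J : ℝ) * ∏ h, δ h ^ (K h - J h)|
      ≤ 2 ^ (∑ h, r h) * (2 ^ (∑ h, r h) * ρ ^ s) := by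
        rw [abs_mul, Nat.abs_cast]
        gcongr
    _ = 4 ^ (∑ h, r h) * ρ ^ s := by
        rw [← mul_assoc, ← mul_pow]
        norm_num

lemma mul_relDegree {n r : σ → ℕ} {D : ℕ} (hr : ∀ h, 0 < r h) (hnr : ∀ h, n h * r h = D)
    (K : σ →₀ ℕ) : D * relDegree r K = ((∑ h, n h * K h : ℕ) : ℝ) := by
  rw [relDegree_eq_sum, Finset.mul_sum]
  push_cast
  refine Finset.sum_congr rfl fun h _ => ?_
  have : (r h : ℝ) ≠ 0 := Nat.cast_ne_zero.2 (hr h).ne'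
  rw [← hnr h]
  push_cast
  field_simp

lemma ceil_le_sum_mul_tsub {n r : σ → ℕ} {D : ℕ} (hr : ∀ h, 0 < r h)
    (hnr : ∀ h, n h * r h = D) {t : ℝ} {J K : σ →₀ ℕ} (h : t + relDegree r J ≤ relDegree r K) :
    ⌈D * t⌉₊ ≤ ∑ h, n h * (K h - J h) := by
  have subadditive : relDegree r K ≤ relDegree r J + relDegree r (K - J) := by
    rw [← map_add, relDegree_eq_sum, relDegree_eq_sum]
    gcongr with h
    exact le_add_tsub
  refine Nat.ceil_le.2 ((mul_le_mul_of_nonneg_left ?_ D.cast_nonneg).trans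
    (mul_relDegree hr hnr (K - J)).le)
  linarith

lemma relDegree_self {r : σ → ℕ} (hr : ∀ h, 0 < r h) :
    relDegree r (Finsupp.equivFunOnFinite.symm r) = Fintype.card σ := by
  simp [relDegree_eq_sum, fun h => (hr h).ne']

end Comparison

section Approximant

/-- The fraction `a ^ n / y` is a good approximation of `1` in the sense of Ridout: it is close
to `1`, its numerator is a power of `a`, and its denominator is divisible by a large power of `b`
even in lowest terms. -/
structure IsApproximant (a b : ℕ) (ρ : ℝ) (n y : ℕ) : Prop where
  pos : 0 < y
  pow_dvd : b ^ n ∣ y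
  le_two_mul_pow : y ≤ 2 * a ^ n
  abs_sub_one_le : |(a : ℝ) ^ n / y - 1| ≤ 2 * ρ ^ n
  pow_le_den : b ^ n ≤ ((a : ℚ) ^ n / y).den

variable {σ : Type*} [Fintype σ] {n r y : σ → ℕ} {D a b : ℕ} {ρ ε : ℝ}
  {P : MvPolynomial σ ℤ} {J : σ →₀ ℕ}

lemma prod_pow_tsub_le (hnr : ∀ h, n h * r h = D)
    (hy : ∀ h, IsApproximant a b ρ (n h) (y h)) (J : σ →₀ ℕ) :
    ∏ h, (y h : ℝ) ^ (r h - J h) ≤ 2 ^ (∑ h, r h) * a ^ (Fintype.card σ * D) :=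
  calc ∏ h, (y h : ℝ) ^ (r h - J h) ≤ ∏ h, (2 ^ r h * (a : ℝ) ^ D) := by
        refine Finset.prod_le_prod (fun _ _ => by positivity) fun h _ => ?_
        have one_le : (1 : ℝ) ≤ y h := by exact_mod_cast (hy h).pos
        calc (y h : ℝ) ^ (r h - J h) ≤ (y h : ℝ) ^ r h :=
              pow_le_pow_right₀ one_le (Nat.sub_le _ _)
          _ ≤ (2 * (a : ℝ) ^ n h) ^ r h := by
              gcongr
              exact_mod_cast (hy h).le_two_mul_pow
          _ = 2 ^ r h * (a : ℝ) ^ D := by rw [mul_pow, ← pow_mul, hnr]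
    _ = 2 ^ (∑ h, r h) * a ^ (Fintype.card σ * D) := by
        rw [Finset.prod_mul_distrib, Finset.prod_pow_eq_pow_sum, Finset.prod_const,
          Finset.card_univ, ← pow_mul, mul_comm D]

lemma IsAuxiliary.abs_coeff_taylor_le (hP : IsAuxiliary r ε P) (hr : ∀ h, 0 < r h)
    (hnr : ∀ h, n h * r h = D) (hρ : 0 ≤ ρ) (hρ1 : ρ ≤ 1)
    (hy : ∀ h, IsApproximant a b ρ (n h) (y h))
    (hJ : relDegree r J ≤ ε * Fintype.card σ) :
    |((coeff J (taylor (fun h => (a : ℚ) ^ n h / y h) (map (Int.castRingHom ℚ) P)) : ℚ) : ℝ)| ≤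
      2 ^ (6 * ∑ h, r h) * ρ ^ ⌈D * ((1 / 2 - 2 * ε) * Fintype.card σ)⌉₊ := by
  have l1Norm_le : (l1Norm (taylor 1 P) : ℝ) ≤ 2 ^ (∑ h, r h) * 8 ^ ∑ h, r h := by
    exact_mod_cast (l1Norm_taylor_one_le hP.degreeOf_le).trans
      (Nat.mul_le_mul_left _ hP.l1Norm_le)
  rw [cast_coeff_taylor_map]
  refine (RationalPowers.abs_coeff_taylor_le (s := ⌈D * ((1 / 2 - 2 * ε) * Fintype.card σ)⌉₊) hρ hρ1
    (fun h => by simpa using (hy h).abs_sub_one_le)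
    (fun K hK => le_of_coeff_taylor_ne_zero hP.degreeOf_le (mem_support_iff.1 hK))
    fun K hK => ceil_le_sum_mul_tsub hr hnr ?_).trans ?_
  · linarith [hP.index K (mem_support_iff.1 hK)]
  · calc _ ≤ (2 ^ (∑ h, r h) * 8 ^ ∑ h, r h) *
          (4 ^ (∑ h, r h) * ρ ^ ⌈D * ((1 / 2 - 2 * ε) * Fintype.card σ)⌉₊) := by gcongr
      _ = _ := by
        rw [← mul_assoc, ← mul_pow, ← mul_pow, pow_mul]
        norm_num

lemma IsAuxiliary.pow_le_abs_taylorNumerator (hP : IsAuxiliary r ε P) (hr : ∀ h, 0 < r h)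
    (hnr : ∀ h, n h * r h = D) (hε : 0 ≤ ε) (hy : ∀ h, IsApproximant a b ρ (n h) (y h))
    (hJ : relDegree r J ≤ ε * Fintype.card σ)
    (hne : taylorNumerator r J (fun h => (a : ℤ) ^ n h) (fun h => (y h : ℤ)) P ≠ 0) :
    ((a : ℤ) * b) ^ ⌈D * ((1 / 2 - 2 * ε) * Fintype.card σ)⌉₊ ≤
      |taylorNumerator r J (fun h => (a : ℤ) ^ n h) (fun h => (y h : ℤ)) P| := by
  refine Int.le_of_dvd (abs_pos.2 hne) ((dvd_abs _ _).2 (pow_dvd_taylorNumerator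
    (fun h => by exact_mod_cast (hy h).pow_dvd)
    (fun i hi => ceil_le_sum_mul_tsub hr hnr ?_)
    fun i hi => ceil_le_sum_mul_tsub (K := Finsupp.equivFunOnFinite.symm r) hr hnr ?_))
  · linarith [hP.le_relDegree i hi]
  · rw [relDegree_self hr]
    nlinarith [hP.relDegree_le i hi, Nat.cast_nonneg (α := ℝ) (Fintype.card σ)]

theorem IsAuxiliary.pow_le (hP : IsAuxiliary r ε P) (hr : ∀ h, 0 < r h)
    (hnr : ∀ h, n h * r h = D) (hε : 0 ≤ ε) (hρ : 0 ≤ ρ) (hρ1 : ρ ≤ 1)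
    (hy : ∀ h, IsApproximant a b ρ (n h) (y h))
    (hindex : IndexAtMost r (ε * Fintype.card σ)
      (taylor (fun h => (a : ℚ) ^ n h / y h) (map (Int.castRingHom ℚ) P))) :
    ((a : ℝ) * b) ^ ⌈D * ((1 / 2 - 2 * ε) * Fintype.card σ)⌉₊ ≤
      2 ^ (7 * ∑ h, r h) * a ^ (Fintype.card σ * D) *
        ρ ^ ⌈D * ((1 / 2 - 2 * ε) * Fintype.card σ)⌉₊ := by
  obtain ⟨J, hJ, coeff_ne⟩ := hindex
  have y_ne (h) : y h ≠ 0 := (hy h).pos.ne'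
  have numerator_eq := cast_taylorNumerator hP.degreeOf_le J (fun h => (a : ℤ) ^ n h)
    (y := fun h => y h) fun h => Nat.cast_ne_zero.2 (y_ne h)
  push_cast at numerator_eq
  have numerator_ne : taylorNumerator r J (fun h => (a : ℤ) ^ n h) (fun h => (y h : ℤ)) P ≠ 0 := by
    rw [← Int.cast_ne_zero (α := ℚ), numerator_eq]
    exact mul_ne_zero (Finset.prod_ne_zero_iff.2 fun h _ =>
      pow_ne_zero _ (Nat.cast_ne_zero.2 (y_ne h))) coeff_ne
  have lower : ((a : ℝ) * b) ^ ⌈D * ((1 / 2 - 2 * ε) * Fintype.card σ)⌉₊ ≤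
      |(taylorNumerator r J (fun h => (a : ℤ) ^ n h) (fun h => (y h : ℤ)) P : ℝ)| := by
    exact_mod_cast hP.pow_le_abs_taylorNumerator hr hnr hε hy hJ numerator_ne
  refine lower.trans ?_
  rw [← Rat.cast_intCast, numerator_eq, Rat.cast_mul, abs_mul]
  push_cast
  rw [abs_of_nonneg (by positivity)]
  calc _ ≤ (2 ^ (∑ h, r h) * (a : ℝ) ^ (Fintype.card σ * D)) *
        (2 ^ (6 * ∑ h, r h) * ρ ^ ⌈D * ((1 / 2 - 2 * ε) * Fintype.card σ)⌉₊) :=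
        mul_le_mul (prod_pow_tsub_le hnr hy J) (hP.abs_coeff_taylor_le hr hnr hρ hρ1 hy hJ)
          (abs_nonneg _) (by positivity)
    _ = _ := by ring

end Approximant

/-! ### Approximants with lacunary exponents -/

lemma exists_mem_lacunary {A : Set ℕ} (hA : A.Infinite) (N : ℕ) {ω : ℝ} (hω : 0 < ω) (m : ℕ) :
    ∃ n : Fin m → ℕ, (∀ h, n h ∈ A) ∧ (∀ h, N ≤ n h) ∧
      ∀ i j, i < j → (n j : ℝ) ≤ ω * n i := by
  induction m with
  | zero => exact ⟨Fin.elim0, fun h => h.elim0, fun h => h.elim0, fun i => i.elim0⟩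
  | succ m ih =>
    obtain ⟨n, n_mem, n_ge, n_lacunary⟩ := ih
    obtain ⟨k, k_mem, lt_k⟩ := hA.exists_gt (max N ⌈(∑ h, (n h : ℝ)) / ω⌉₊)
    have sum_le : ∑ h, (n h : ℝ) ≤ ω * k :=
      (div_le_iff₀' hω).1 (Nat.ceil_le.1 ((le_max_right _ _).trans lt_k.le))
    refine ⟨Fin.cons k n, Fin.forall_fin_succ.2 ⟨k_mem, n_mem⟩,
      Fin.forall_fin_succ.2 ⟨(le_max_left _ _).trans lt_k.le, n_ge⟩, fun i j hij => ?_⟩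
    cases j using Fin.cases with
    | zero => exact absurd hij (Fin.not_lt_zero i)
    | succ j =>
      cases i using Fin.cases with
      | zero =>
        exact (Finset.single_le_sum (f := fun h => (n h : ℝ)) (fun _ _ => Nat.cast_nonneg _)
          (Finset.mem_univ j)).trans sum_le
      | succ i => exact n_lacunary i j (Fin.succ_lt_succ_iff.1 hij)

lemma exists_forall_mul_eq {σ : Type*} [Finite σ] {n : σ → ℕ} (hn : ∀ h, 0 < n h) :
    ∃ (D : ℕ) (r : σ → ℕ), 0 < D ∧ (∀ h, 0 < r h) ∧ ∀ h, n h * r h = D := by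
  classical
  cases nonempty_fintype σ
  exact ⟨∏ h, n h, fun h => ∏ x ∈ Finset.univ.erase h, n x, Finset.prod_pos fun h _ => hn h,
    fun h => Finset.prod_pos fun x _ => hn x,
    fun h => Finset.mul_prod_erase _ _ (Finset.mem_univ h)⟩

lemma mul_sum_le_card_mul {σ : Type*} [Fintype σ] {n r : σ → ℕ} {D N : ℕ}
    (hnr : ∀ h, n h * r h = D) (hn : ∀ h, N ≤ n h) :
    N * ∑ h, (r h : ℝ) ≤ Fintype.card σ * D := by
  have : N * ∑ h, r h ≤ Fintype.card σ * D := by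
    rw [Finset.mul_sum]
    exact Finset.sum_le_card_nsmul _ _ _ fun h _ => hnr h ▸ Nat.mul_le_mul_right _ (hn h)
  exact_mod_cast this

lemma IsApproximant.mul_log_two_le_log_den {a b n y : ℕ} {ρ : ℝ} (hb : 2 ≤ b)
    (h : IsApproximant a b ρ n y) : n * Real.log 2 ≤ Real.log ((a : ℚ) ^ n / y : ℚ).den := by
  rw [← Real.log_pow]
  refine Real.log_le_log (by positivity) ?_
  exact_mod_cast (Nat.pow_le_pow_left hb n).trans h.pow_le_den

section Lacunary

variable {m D N a b : ℕ} {n r y : Fin m → ℕ} {ρ ε ω : ℝ} {P : MvPolynomial (Fin m) ℤ}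

lemma IsAuxiliary.log_l1Norm_le (hP : IsAuxiliary r ε P) :
    Real.log (l1Norm P) ≤ 3 * Real.log 2 * ∑ h, (r h : ℝ) :=
  calc Real.log (l1Norm P) ≤ Real.log (2 ^ (3 * ∑ h, r h)) := by
        refine Real.log_le_log (Nat.cast_pos.2 (l1Norm_pos hP.ne_zero)) ?_
        rw [pow_mul]
        exact_mod_cast hP.l1Norm_le
    _ = 3 * Real.log 2 * ∑ h, (r h : ℝ) := by
        rw [Real.log_pow]
        push_cast
        ring

lemma IsAuxiliary.rothAdmissible (hP : IsAuxiliary r ε P) (hr : ∀ h, 0 < r h)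
    (hnr : ∀ h, n h * r h = D) (hn0 : ∀ h, 0 < n h) (hn : ∀ h, N ≤ n h)
    (hω : 0 ≤ ω) (hNω : (3 * Real.log 2 + 2 * m) * m ≤ ω * Real.log 2 * N)
    (hlac : ∀ i j, i < j → (n j : ℝ) ≤ ω * n i) (hb : 2 ≤ b)
    (hy : ∀ h, IsApproximant a b ρ (n h) (y h)) :
    RothAdmissible ω r (fun h => (a : ℚ) ^ n h / y h) P where
  ne_zero := hP.ne_zero
  pos := hr
  degreeOf_le := hP.degreeOf_le
  ratio i j hij := by
    have cross : (n i * r i : ℝ) = n j * r j := by exact_mod_cast (hnr i).trans (hnr j).symm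
    refine le_of_mul_le_mul_right ?_ (Nat.cast_pos.2 (hn0 j) : (0 : ℝ) < n j)
    calc (r i : ℝ) * n j ≤ r i * (ω * n i) := by gcongr; exact hlac i j hij
      _ = ω * r j * n j := by linear_combination ω * cross
  height h := by
    have hD_eq : (n h * r h : ℝ) = D := by exact_mod_cast hnr h
    have sum_le : N * ∑ x, (r x : ℝ) ≤ m * D := by simpa using mul_sum_le_card_mul hnr hn
    have height_le : (3 * Real.log 2 + 2 * m) * ∑ x, (r x : ℝ) ≤ ω * Real.log 2 * D := by
      refine le_of_mul_le_mul_left ?_ (Nat.cast_pos.2 h.pos : (0 : ℝ) < m)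
      calc m * ((3 * Real.log 2 + 2 * m) * ∑ x, (r x : ℝ))
          = (3 * Real.log 2 + 2 * m) * m * ∑ x, (r x : ℝ) := by ring
        _ ≤ ω * Real.log 2 * N * ∑ x, (r x : ℝ) := by gcongr
        _ ≤ ω * Real.log 2 * (m * D) := by rw [mul_assoc _ (N : ℝ)]; gcongr
        _ = m * (ω * Real.log 2 * D) := by ring
    calc Real.log (l1Norm P) + 2 * m * ∑ x, (r x : ℝ)
        ≤ (3 * Real.log 2 + 2 * m) * ∑ x, (r x : ℝ) := by linarith [hP.log_l1Norm_le]
      _ ≤ ω * Real.log 2 * D := height_le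
      _ = ω * r h * (n h * Real.log 2) := by rw [← hD_eq]; ring
      _ ≤ ω * r h * Real.log ((a : ℚ) ^ n h / y h : ℚ).den := by
        gcongr
        exact (hy h).mul_log_two_le_log_den hb

end Lacunary

lemma mul_log_le_of_pow_le {a b M S s : ℕ} {ρ ε : ℝ} (ha : 0 < a) (hb : 0 < b) (hρ : 0 < ρ)
    (hε : ε ≤ 1 / 8) (hl : 0 < Real.log (b / (a * ρ)))
    (hεl : 32 * ε * Real.log a ≤ Real.log (b / (a * ρ))) (hs : (1 / 2 - 2 * ε) * M ≤ s)
    (h : ((a : ℝ) * b) ^ s ≤ 2 ^ (7 * S) * a ^ M * ρ ^ s) :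
    M * Real.log (b / (a * ρ)) ≤ 56 * Real.log 2 * S := by
  have ha' : (0 : ℝ) < a := Nat.cast_pos.2 ha
  have hb' : (0 : ℝ) < b := Nat.cast_pos.2 hb
  set l := Real.log (b / (a * ρ)) with l_def
  have log_ρ : Real.log ρ = Real.log b - Real.log a - l := by
    rw [l_def, Real.log_div hb'.ne' (by positivity), Real.log_mul ha'.ne' hρ.ne']
    ring
  have log_le : s * (2 * Real.log a + l) ≤ 7 * S * Real.log 2 + M * Real.log a := by
    have := Real.log_le_log (by positivity) h
    rw [Real.log_mul (by positivity) (by positivity), Real.log_mul (by positivity) (by positivity),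
      Real.log_pow, Real.log_pow, Real.log_pow, Real.log_pow, Real.log_mul ha'.ne' hb'.ne',
      log_ρ] at this
    push_cast at this
    linarith
  have main_le : (1 / 2 - 2 * ε) * M * (2 * Real.log a + l) ≤
      7 * S * Real.log 2 + M * Real.log a :=
    (mul_le_mul_of_nonneg_right hs (by positivity)).trans log_le
  have eighth_le : l / 8 ≤ (1 / 2 - 2 * ε) * l - 4 * ε * Real.log a := by
    linarith [mul_le_mul_of_nonneg_right hε hl.le]
  linarith [mul_le_mul_of_nonneg_left eighth_le (Nat.cast_nonneg (α := ℝ) M)]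

lemma IsAuxiliary.card_mul_log_le {σ : Type*} [Fintype σ] {n r y : σ → ℕ} {D a b : ℕ} {ρ ε : ℝ}
    {P : MvPolynomial σ ℤ} (hP : IsAuxiliary r ε P) (hr : ∀ h, 0 < r h)
    (hnr : ∀ h, n h * r h = D) (ha : 0 < a) (hb : 0 < b) (hρ : 0 < ρ) (hρ1 : ρ ≤ 1)
    (hε : 0 ≤ ε) (hε8 : ε ≤ 1 / 8) (hl : 0 < Real.log (b / (a * ρ)))
    (hεl : 32 * ε * Real.log a ≤ Real.log (b / (a * ρ)))
    (hy : ∀ h, IsApproximant a b ρ (n h) (y h))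
    (hindex : IndexAtMost r (ε * Fintype.card σ)
      (taylor (fun h => (a : ℚ) ^ n h / y h) (map (Int.castRingHom ℚ) P))) :
    Fintype.card σ * D * Real.log (b / (a * ρ)) ≤ 56 * Real.log 2 * ∑ h, (r h : ℝ) := by
  have le_ceil := Nat.le_ceil (D * ((1 / 2 - 2 * ε) * Fintype.card σ))
  have := mul_log_le_of_pow_le ha hb hρ hε8 hl hεl
    (by push_cast; linarith) (hP.pow_le hr hnr hε hρ.le hρ1 hy hindex)
  push_cast at this
  exact this

theorem not_forall_isApproximant {m a b N : ℕ} {ρ ε ω : ℝ} (hb : 2 ≤ b) (ha : 0 < a)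
    (hρ : 0 < ρ) (hρ1 : ρ ≤ 1) (hl : 0 < Real.log (b / (a * ρ))) (hε : 0 < ε)
    (hε8 : ε ≤ 1 / 8) (hεl : 32 * ε * Real.log a ≤ Real.log (b / (a * ρ)))
    (hm : 1 ≤ ε ^ 2 * m) (hω : 0 < ω)
    (roth : ∀ (r : Fin m → ℕ) ξ P, RothAdmissible ω r ξ P →
      IndexAtMost r ε (taylor ξ (map (Int.castRingHom ℚ) P)))
    (hNω : (3 * Real.log 2 + 2 * m) * m ≤ ω * Real.log 2 * N)
    (hNl : 56 * Real.log 2 < N * Real.log (b / (a * ρ)))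
    {n : Fin m → ℕ} (hn : ∀ h, N ≤ n h) (hlac : ∀ i j, i < j → (n j : ℝ) ≤ ω * n i)
    (y : Fin m → ℕ) : ¬ ∀ h, IsApproximant a b ρ (n h) (y h) := by
  intro hy
  set l := Real.log (b / (a * ρ))
  have N_pos : (0 : ℝ) < N := pos_of_mul_pos_left (hNl.trans' (by positivity)) hl.le
  have m_pos : (0 : ℝ) < m := pos_of_mul_pos_right (one_pos.trans_le hm) (sq_nonneg ε)
  have n_pos (h) : 0 < n h := (Nat.cast_pos.1 N_pos).trans_le (hn h)
  obtain ⟨D, r, D_pos, r_pos, hnr⟩ := exists_forall_mul_eq n_pos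
  obtain ⟨P, hP⟩ := exists_isAuxiliary r_pos hε (by linarith) (by simpa using hm)
  obtain ⟨J, hJ, coeff_ne⟩ :=
    roth _ _ P (hP.rothAdmissible r_pos hnr n_pos hn hω.le hNω hlac hb hy)
  have one_le_m : (1 : ℝ) ≤ m := Nat.one_le_cast.2 (Nat.cast_pos.1 m_pos)
  have hJ' : relDegree r J ≤ ε * Fintype.card (Fin m) :=
    hJ.trans (le_mul_of_one_le_right hε.le (by simpa using one_le_m))
  have log_le : m * D * l ≤ 56 * Real.log 2 * ∑ h, (r h : ℝ) := by
    simpa using hP.card_mul_log_le r_pos hnr ha (by lia) hρ hρ1 hε.le hε8 hl hεl hy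
      ⟨J, hJ', coeff_ne⟩
  have sum_le : N * ∑ h, (r h : ℝ) ≤ m * D := by simpa using mul_sum_le_card_mul hnr hn
  refine hNl.not_ge (le_of_mul_le_mul_left ?_ (by positivity : (0 : ℝ) < m * D))
  calc (m * D : ℝ) * (N * l) = N * (m * D * l) := by ring
    _ ≤ N * (56 * Real.log 2 * ∑ h, (r h : ℝ)) := by gcongr
    _ = 56 * Real.log 2 * (N * ∑ h, (r h : ℝ)) := by ring
    _ ≤ 56 * Real.log 2 * (m * D) := by gcongr
    _ = m * D * (56 * Real.log 2) := by ring

theorem exists_forall_lacunary_not_isApproximant {a b : ℕ} {ρ : ℝ} (hb : 2 ≤ b) (ha : 1 < a)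
    (hρ : 0 < ρ) (hρ1 : ρ ≤ 1) (haρ : a * ρ < b) :
    ∃ (m N : ℕ) (ω : ℝ), 0 < ω ∧ ∀ n y : Fin m → ℕ, (∀ h, N ≤ n h) →
      (∀ i j, i < j → (n j : ℝ) ≤ ω * n i) → ¬ ∀ h, IsApproximant a b ρ (n h) (y h) := by
  have log_a : 0 < Real.log a := Real.log_pos (by exact_mod_cast ha)
  set l := Real.log (b / (a * ρ))
  have l_pos : 0 < l := Real.log_pos ((one_lt_div (by positivity)).2 haρ)
  obtain ⟨ε, ε_pos, ε_le⟩ : ∃ ε : ℝ, 0 < ε ∧ ε ≤ min (1 / 8) (l / (32 * Real.log a)) :=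
    ⟨_, by positivity, le_rfl⟩
  have hεl : 32 * ε * Real.log a ≤ l := by
    linarith [(le_div_iff₀ (by positivity)).1 (ε_le.trans (min_le_right _ _))]
  obtain ⟨m, hm⟩ := exists_nat_ge (1 / ε ^ 2)
  rw [div_le_iff₀' (by positivity)] at hm
  have ε_le_eighth : ε ≤ 1 / 8 := ε_le.trans (min_le_left _ _)
  obtain ⟨ω, ω_pos, roth⟩ := exists_forall_rothAdmissible_indexAtMost m ε_pos (by linarith)
  obtain ⟨N, hN⟩ := exists_nat_gt
    (max ((3 * Real.log 2 + 2 * m) * m / (ω * Real.log 2)) (56 * Real.log 2 / l))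
  obtain ⟨hNω, hNl⟩ := max_lt_iff.1 hN
  rw [div_lt_iff₀' (by positivity)] at hNω
  rw [div_lt_iff₀ l_pos] at hNl
  exact ⟨m, N, ω, ω_pos, fun n y hn hlac => not_forall_isApproximant hb (by lia) hρ hρ1 l_pos
    ε_pos ε_le_eighth hεl hm ω_pos roth hNω.le hNl hn hlac y⟩

/-! ### Powers of a rational number near integers -/

section RationalPower

variable {α : ℚ} {c : ℝ} {n : ℕ}

lemma cast_natAbs_num_eq (hα : 0 < α) : (α.num.natAbs : ℝ) = α * α.den := by
  have : (α.num.natAbs : ℚ) = α * α.den := by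
    rw [Rat.mul_den_eq_num, Nat.cast_natAbs, abs_of_pos (Rat.num_pos.2 hα)]
  exact_mod_cast this

lemma one_lt_natAbs_num (hα : 1 < α) : 1 < α.num.natAbs := by
  have one_le_den : (1 : ℝ) ≤ α.den := by exact_mod_cast α.den_pos
  have one_lt : (1 : ℝ) < α := by exact_mod_cast hα
  rw [← Nat.one_lt_cast (α := ℝ), cast_natAbs_num_eq (one_pos.trans hα)]
  nlinarith

lemma den_pow_le_den {k : ℕ} (hk : 0 < k) (hα : 0 < α) :
    α.den ^ n ≤ ((α.num.natAbs : ℚ) ^ n / (α.den ^ n * k : ℕ)).den := by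
  have mul_eq : ((α.num.natAbs : ℚ) ^ n / (α.den ^ n * k : ℕ)) * k = α ^ n := by
    have : (α.num.natAbs : ℚ) = α * α.den := by exact_mod_cast cast_natAbs_num_eq hα
    rw [this]
    push_cast
    field_simp
    ring
  have := Rat.mul_den_dvd ((α.num.natAbs : ℚ) ^ n / (α.den ^ n * k : ℕ)) k
  rw [mul_eq, Rat.den_pow, Rat.den_natCast, mul_one] at this
  exact Nat.le_of_dvd (Rat.den_pos _) this

lemma exists_isApproximant (hα : 0 < α) {k : ℤ} (hk : |(α : ℝ) ^ n - k| ≤ c ^ n)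
    (hc : (c / α) ^ n ≤ 1 / 2) :
    ∃ y, IsApproximant α.num.natAbs α.den (c / α) n y := by
  have α_pos : (0 : ℝ) < (α : ℝ) ^ n := pow_pos (Rat.cast_pos.2 hα) n
  have den_pos : (0 : ℝ) < (α.den : ℝ) ^ n := by positivity
  have c_le : c ^ n ≤ α ^ n / 2 := by
    rw [div_pow, div_le_iff₀ α_pos] at hc
    linarith
  obtain ⟨lower, upper⟩ := abs_le.1 hk
  have half_le : (α : ℝ) ^ n / 2 ≤ k := by linarith
  lift k to ℕ using by exact_mod_cast (by linarith : (0 : ℝ) ≤ k)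
  rw [Int.cast_natCast] at *
  have k_pos : (0 : ℝ) < k := by linarith
  refine ⟨α.den ^ n * k, by exact_mod_cast mul_pos den_pos k_pos, Dvd.intro _ rfl, ?_, ?_,
    den_pow_le_den (Nat.cast_pos.1 k_pos) hα⟩
  · have : (α.den : ℝ) ^ n * k ≤ 2 * (α.num.natAbs : ℝ) ^ n := by
      rw [cast_natAbs_num_eq hα, mul_pow]
      nlinarith
    exact_mod_cast this
  · rw [cast_natAbs_num_eq hα, mul_pow]
    push_cast
    rw [mul_comm, mul_div_mul_left _ _ den_pos.ne', div_sub_one k_pos.ne', abs_div,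
      abs_of_pos k_pos, div_le_iff₀ k_pos, div_pow]
    have c_nonneg : 0 ≤ c ^ n := (abs_nonneg _).trans hk
    calc |(α : ℝ) ^ n - k| ≤ c ^ n := hk
      _ = 2 * (c ^ n / α ^ n) * (α ^ n / 2) := by field_simp
      _ ≤ 2 * (c ^ n / α ^ n) * k := by gcongr

end RationalPower

end

end RationalPowers

open RationalPowers

/-- Mahler's theorem (1957): for a non-integral rational `α > 1` and `0 < c < 1`,
there are only finitely many positive integers `n` with `‖α^n‖ < c^n`, where
`‖x‖ = |x - round x|` is the distance to the nearest integer. -/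
theorem mahler_1957 (α : ℚ) (hα : 1 < α) (hnotint : ¬ ∃ m : ℤ, α = m)
    (c : ℝ) (hc0 : 0 < c) (hc1 : c < 1) :
    {n : ℕ | 0 < n ∧ |((α : ℝ)) ^ n - round (((α : ℝ)) ^ n)| < c ^ n}.Finite := by
  by_contra infinite
  have α_pos : 0 < α := one_pos.trans hα
  have one_lt_α : (1 : ℝ) < α := by exact_mod_cast hα
  have den_pos : (0 : ℝ) < α.den := Nat.cast_pos.2 α.den_pos
  have two_le_den : 2 ≤ α.den := (Nat.two_le_iff _).2
    ⟨α.den_ne_zero, fun h => hnotint ⟨α.num, ((Rat.den_eq_one_iff α).1 h).symm⟩⟩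
  have ρ_lt_one : c / α < 1 := (div_lt_one (by linarith)).2 (hc1.trans one_lt_α)
  obtain ⟨k, hk⟩ := exists_pow_lt_of_lt_one one_half_pos ρ_lt_one
  obtain ⟨m, N, ω, ω_pos, not_approximant⟩ := exists_forall_lacunary_not_isApproximant
    two_le_den (one_lt_natAbs_num hα) (by positivity) ρ_lt_one.le (ρ := c / α) (by
      rw [cast_natAbs_num_eq α_pos]
      field_simp
      exact hc1)
  obtain ⟨n, n_mem, n_ge, lacunary⟩ := exists_mem_lacunary infinite (max N k) ω_pos m
  choose y hy using fun h => exists_isApproximant α_pos (n_mem h).2.le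
    ((pow_le_pow_of_le_one (by positivity) ρ_lt_one.le
      ((le_max_right _ _).trans (n_ge h))).trans hk.le)
  exact not_approximant n y (fun h => (le_max_left _ _).trans (n_ge h)) lacunary hy
end

section
/- Let α be a real, positive algebraic number and h the order of the group of roots of unity in the splitting field of the minimal polynomial of α over ℚ. Then Tr_{ℚ(α)/ℚ}(α^n) = 0 for infinitely many natural numbers n if and only if α ∉ ℚ(α^h). -/
open IntermediateField

/-!
The criterion goes through the condition that `x ∉ ℚ(x ^ r)` for some `r ≠ 0`, where `x` is a
nonzero element of a number field with a real embedding.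

If `x ^ r ∈ L`, then all conjugates of `x` over `L` have the same absolute value, so the constant
coefficient of the minimal polynomial of `x` over `L` is `± x ^ m`, with `m` its degree; hence
`x ^ m ∈ L` and the minimal polynomial is `X ^ m - x ^ m`. For `L = ℚ(x ^ r)` this has two
consequences. If `m > 1`, the trace of `x` to `L` vanishes, and with it every `Tr (x ^ (1 + r k))`.
Moreover the splitting field contains a primitive `m`-th root of unity, being a quotient of two
conjugates of `x`, so `m ∣ h` and `x ^ h ∈ ℚ(x ^ r)` whatever `r` is.

Conversely, suppose `Tr (x ^ n) = 0` infinitely often; we may take `x` integral. Choose a prime `p`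
coprime to `x` and `r` with `x ^ r ≡ 1` modulo `p ^ 2`. Along each residue class modulo `r` the
trace is a `p`-adic factorial series in `k`, and such a series with infinitely many zeros vanishes
(Skolem's method): modulo `p ^ N` it is a polynomial of degree less than `N`, divisible by a monic
polynomial of degree `N`. So `Tr (x ^ (a + r k)) = 0` for some `a` and all `k`. If `x` were in
`ℚ(x ^ r)`, then `x ^ (-a)` would be a rational combination of the `x ^ (r k)`, and `Tr 1 = 0`.
-/

open Finset Polynomial NumberField

section FactorialSeries

variable {R S : Type*} [CommRing R]

theorem map_eq_zero_of_degree_map_lt_card [IsDomain R] [CommRing S] (f : R →+* S) (P : R[X])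
    (s : Finset R) (hs : ∀ t ∈ s, P.eval t = 0) (hdeg : (P.map f).degree < #s) :
    P.map f = 0 := by
  nontriviality S
  rcases eq_or_ne P 0 with rfl | hP
  · exact Polynomial.map_zero f
  have hdvd : ∏ t ∈ s, (X - C t) ∣ P := by
    refine (Multiset.prod_X_sub_C_dvd_iff_le_roots hP s.val).2 ?_
    exact (Multiset.le_iff_subset s.nodup).2 fun t ht ↦ (mem_roots hP).2 (hs t ht)
  have hmonic : (∏ t ∈ s, (X - C t)).Monic := monic_prod_of_monic _ _ fun t _ ↦ monic_X_sub_C t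
  have hcard : ((∏ t ∈ s, (X - C t)).map f).degree = (#s : WithBot ℕ) := by
    simp [hmonic.degree_map, degree_prod]
  by_contra hne
  exact (hmonic.map f).not_dvd_of_degree_lt hne (hcard ▸ hdeg) (Polynomial.map_dvd f hdvd)

/-- The function `k ↦ ∑ⱼ aⱼ k(k - 1)⋯(k - j + 1)` on `ℕ` attached to a sequence `a`. The sum is
finite, because its terms vanish for `j > k`. -/
def factorialSeries (a : ℕ → R) (k : ℕ) : R :=
  ∑ j ∈ range (k + 1), a j * k.descFactorial j

/-- The partial sum `∑_{j < n} aⱼ X(X - 1)⋯(X - j + 1)` of a factorial series, as a polynomial. -/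
noncomputable def factorialPoly (a : ℕ → R) (n : ℕ) : R[X] :=
  ∑ j ∈ range n, C (a j) * descPochhammer R j

theorem eval_natCast_factorialPoly (a : ℕ → R) {k n : ℕ} (hkn : k < n) :
    (factorialPoly a n).eval (k : R) = factorialSeries a k := by
  simp only [factorialPoly, factorialSeries, eval_finsetSum, eval_mul, eval_C,
    descPochhammer_eval_eq_descFactorial]
  refine (sum_subset (range_mono hkn) fun j _ hj ↦ ?_).symm
  rw [Nat.descFactorial_of_lt (by simpa using hj), Nat.cast_zero, mul_zero]

theorem degree_map_factorialPoly_lt [CommRing S] (f : R →+* S) {a : ℕ → R} {N : ℕ}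
    (ha : ∀ j, N ≤ j → f (a j) = 0) (n : ℕ) : ((factorialPoly a n).map f).degree < N := by
  rw [factorialPoly, Polynomial.map_sum, ← mem_degreeLT]
  refine Submodule.sum_mem _ fun j _ ↦ mem_degreeLT.2 ?_
  rw [Polynomial.map_mul, map_C, descPochhammer_map]
  rcases lt_or_ge j N with hj | hj
  · calc (C (f (a j)) * descPochhammer S j).degree
        ≤ (descPochhammer S j).degree := by
          rw [← smul_eq_C_mul]
          exact degree_smul_le _ _
      _ ≤ (descPochhammer ℤ j).degree := by
          rw [← descPochhammer_map (Int.castRingHom S)]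
          exact degree_map_le
      _ ≤ j := degree_le_of_natDegree_le (descPochhammer_natDegree ℤ j).le
      _ < N := by exact_mod_cast hj
  · simp [ha j hj]

theorem map_factorialSeries_eq_zero [IsDomain R] [CharZero R] [CommRing S] (f : R →+* S)
    {a : ℕ → R} {N : ℕ} (ha : ∀ j, N ≤ j → f (a j) = 0)
    (hinf : {k | factorialSeries a k = 0}.Infinite) (k : ℕ) : f (factorialSeries a k) = 0 := by
  classical
  obtain ⟨s, hs, hcard⟩ := hinf.exists_subset_card_eq N
  set n := max k (s.sup id) + 1
  have hlt : ∀ i ∈ s, i < n := fun i hi ↦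
    Nat.lt_succ_of_le (le_max_of_le_right (le_sup (f := id) hi))
  have hzero : (factorialPoly a n).map f = 0 := by
    refine map_eq_zero_of_degree_map_lt_card f _ (s.map Nat.castEmbedding) ?_ ?_
    · simp only [mem_map, Nat.castEmbedding_apply, forall_exists_index, and_imp,
        forall_apply_eq_imp_iff₂]
      exact fun i hi ↦ (eval_natCast_factorialPoly a (hlt i hi)).trans (hs hi)
    · rw [card_map, hcard]
      exact degree_map_factorialPoly_lt f ha n
  rw [← eval_natCast_factorialPoly a (show k < n from Nat.lt_succ_of_le (le_max_left _ _)),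
    ← eval_map_apply, hzero, eval_zero]

end FactorialSeries

section PadicInterpolation

variable (p : ℕ) [hp : Fact p.Prime]

theorem padicInt_factorial_dvd_pow (j : ℕ) : (j.factorial : ℤ_[p]) ∣ (p : ℤ_[p]) ^ j := by
  obtain ⟨v, m, hm, hv⟩ :=
    Nat.exists_eq_pow_mul_and_not_dvd (Nat.factorial_ne_zero j) p hp.out.ne_one
  have hvj : v ≤ j := ((padicValNat_dvd_iff_le (Nat.factorial_ne_zero j)).1 ⟨m, hv⟩).trans
    (padicValNat_factorial_le (p := p) j)
  have hu : IsUnit (m : ℤ_[p]) :=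
    PadicInt.isUnit_iff.2 (by
      simpa using Padic.norm_natCast_eq_one_iff.2 ((Nat.Prime.coprime_iff_not_dvd hp.out).2 hm))
  rw [hv, Nat.cast_mul, Nat.cast_pow]
  exact hu.mul_right_dvd.2 (pow_dvd_pow _ hvj)

theorem factorialSeries_eq_zero_of_pow_dvd {a : ℕ → ℤ_[p]} (ha : ∀ j, (p : ℤ_[p]) ^ j ∣ a j)
    (hinf : {k | factorialSeries a k = 0}.Infinite) (k : ℕ) : factorialSeries a k = 0 := by
  refine PadicInt.ext_of_toZModPow.1 fun N ↦ ?_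
  rw [map_zero]
  refine map_factorialSeries_eq_zero _ (N := N) (fun j hj ↦ ?_) hinf k
  rw [← RingHom.mem_ker, PadicInt.ker_toZModPow, Ideal.mem_span_singleton]
  exact (pow_dvd_pow _ hj).trans (ha j)

theorem exists_factorialSeries_eq_apply_mul_pow {R : Type*} [CommRing R] (ℓ : R →+ ℤ_[p])
    (x : R) {y : R} (hy : (p : R) ^ 2 ∣ y - 1) :
    ∃ a : ℕ → ℤ_[p], (∀ j, (p : ℤ_[p]) ^ j ∣ a j) ∧
      ∀ k, ℓ (x * y ^ k) = factorialSeries a k := by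
  obtain ⟨z, hz⟩ := hy
  -- Of the two factors `p ^ j` of `p ^ (2 * j)`, one absorbs the denominator of
  -- `k.choose j = k.descFactorial j / j!` and the other is left for `a j`.
  choose c hc using padicInt_factorial_dvd_pow p
  refine ⟨fun j ↦ p ^ j * (c j * ℓ (x * z ^ j)), fun j ↦ dvd_mul_right _ _, fun k ↦ ?_⟩
  have hexpand : x * y ^ k = ∑ j ∈ range (k + 1), (p ^ (2 * j) * k.choose j) • (x * z ^ j) := by
    rw [eq_add_of_sub_eq hz, add_pow, mul_sum]
    refine sum_congr rfl fun j _ ↦ ?_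
    simp only [nsmul_eq_mul, Nat.cast_mul, Nat.cast_pow, one_pow]
    ring
  rw [hexpand, map_sum, factorialSeries]
  refine sum_congr rfl fun j _ ↦ ?_
  rw [map_nsmul, nsmul_eq_mul, Nat.descFactorial_eq_factorial_mul_choose]
  push_cast
  linear_combination (p : ℤ_[p]) ^ j * k.choose j * ℓ (x * z ^ j) * hc j

theorem apply_mul_pow_eq_zero_of_infinite {R : Type*} [CommRing R] (ℓ : R →+ ℤ) (x : R) {y : R}
    (hy : (p : R) ^ 2 ∣ y - 1) (hinf : {k | ℓ (x * y ^ k) = 0}.Infinite) (k : ℕ) :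
    ℓ (x * y ^ k) = 0 := by
  obtain ⟨a, ha, hseries⟩ := exists_factorialSeries_eq_apply_mul_pow p
    ((Int.castAddHom ℤ_[p]).comp ℓ) x hy
  have hiff : ∀ n, ℓ (x * y ^ n) = 0 ↔ factorialSeries a n = 0 := fun n ↦ by
    simp [← hseries]
  simp only [hiff] at hinf ⊢
  exact factorialSeries_eq_zero_of_pow_dvd p ha hinf k

end PadicInterpolation

theorem exists_infinite_add_mul_mem {S : Set ℕ} (hS : S.Infinite) {r : ℕ} (hr : r ≠ 0) :
    ∃ a, {k | a + r * k ∈ S}.Infinite := by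
  by_contra! hfin
  refine hS (((Set.finite_Iio r).biUnion fun a _ ↦ (hfin a).image (a + r * ·)).subset ?_)
  intro n hn
  simp only [Set.mem_iUnion]
  exact ⟨n % r, Nat.mod_lt _ hr.bot_lt, n / r, by simpa [Nat.mod_add_div] using hn,
    Nat.mod_add_div n r⟩

theorem exists_dvd_pow_sub_one {R : Type*} [CommRing R] {a b : R} (hab : IsCoprime a b)
    [Finite (R ⧸ Ideal.span {b})] : ∃ r ≠ 0, b ∣ a ^ r - 1 := by
  obtain ⟨u, v, huv⟩ := hab
  have hunit : IsUnit (Ideal.Quotient.mk (Ideal.span {b}) a) := by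
    refine .of_mul_eq_one (Ideal.Quotient.mk _ u) ?_
    rw [← map_mul, ← map_one (Ideal.Quotient.mk _), Ideal.Quotient.eq, Ideal.mem_span_singleton]
    exact ⟨-v, by linear_combination huv⟩
  obtain ⟨w, hw⟩ := hunit
  refine ⟨Nat.card (R ⧸ Ideal.span {b})ˣ, Nat.card_pos.ne', ?_⟩
  rw [← Ideal.mem_span_singleton, ← Ideal.Quotient.eq, map_pow, ← hw, ← Units.val_pow_eq_pow_val,
    pow_card_eq_one', Units.val_one, map_one]

section NumberField

variable {K : Type*} [Field K] [NumberField K]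

theorem exists_prime_isCoprime {β : 𝓞 K} (hβ : β ≠ 0) :
    ∃ p : ℕ, p.Prime ∧ IsCoprime β (p : 𝓞 K) := by
  set N := Ideal.absNorm (Ideal.span {β}) with hN
  have hN0 : N ≠ 0 := by
    rwa [hN, Ne, Ideal.absNorm_eq_zero_iff, Ideal.span_singleton_eq_bot]
  obtain ⟨p, hNp, hp⟩ := Nat.exists_infinite_primes (N + 1)
  have hcop : N.Coprime p := (Nat.coprime_of_lt_prime hN0 hNp hp).symm
  refine ⟨p, hp, IsCoprime.of_isCoprime_of_dvd_left hcop.cast ?_⟩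
  exact Ideal.mem_span_singleton.1 (Ideal.absNorm_mem _)

theorem exists_prime_sq_dvd_pow_sub_one {β : 𝓞 K} (hβ : β ≠ 0) :
    ∃ p : ℕ, p.Prime ∧ ∃ r ≠ 0, (p : 𝓞 K) ^ 2 ∣ β ^ r - 1 := by
  obtain ⟨p, hp, hcop⟩ := exists_prime_isCoprime hβ
  have : Finite (𝓞 K ⧸ Ideal.span {(p : 𝓞 K) ^ 2}) := Ideal.finiteQuotientOfFreeOfNeBot _ <| by
    simp [hp.ne_zero]
  exact ⟨p, hp, exists_dvd_pow_sub_one hcop.pow_right⟩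

theorem exists_forall_apply_pow_add_mul_eq_zero (ℓ : 𝓞 K →+ ℤ) {β : 𝓞 K} (hβ : β ≠ 0)
    (hinf : {n | ℓ (β ^ n) = 0}.Infinite) :
    ∃ a, ∃ r ≠ 0, ∀ k, ℓ (β ^ (a + r * k)) = 0 := by
  obtain ⟨p, hp, r, hr, hdvd⟩ := exists_prime_sq_dvd_pow_sub_one hβ
  have : Fact p.Prime := ⟨hp⟩
  obtain ⟨a, ha⟩ := exists_infinite_add_mul_mem hinf hr
  refine ⟨a, r, hr, ?_⟩
  simp only [Set.mem_ofPred_eq, pow_add, pow_mul] at ha ⊢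
  exact apply_mul_pow_eq_zero_of_infinite p ℓ _ hdvd ha

theorem exists_forall_trace_pow_add_mul_eq_zero {x : K} (hx : x ≠ 0)
    (hinf : {n | Algebra.trace ℚ K (x ^ n) = 0}.Infinite) :
    ∃ a, ∃ r ≠ 0, ∀ k, Algebra.trace ℚ K (x ^ (a + r * k)) = 0 := by
  obtain ⟨d, hd, hint⟩ :=
    ((IsFractionRing.isAlgebraic_iff ℤ ℚ K).2 (.of_finite ℚ x)).exists_integral_multiple
  let β : 𝓞 K := ⟨d • x, hint⟩
  have htrace (n : ℕ) : Algebra.trace ℤ (𝓞 K) (β ^ n) = 0 ↔ Algebra.trace ℚ K (x ^ n) = 0 := by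
    have hpow : ((β ^ n : 𝓞 K) : K) = (d : ℚ) ^ n • x ^ n := by
      change (d • x) ^ n = _
      simp [Algebra.smul_def, mul_pow]
    rw [← Int.cast_eq_zero (α := ℚ), Algebra.coe_trace_int, hpow, map_smul, smul_eq_mul]
    simp [hd]
  have hβ : β ≠ 0 := fun h ↦ smul_ne_zero hd hx (congrArg Subtype.val h)
  simp only [← htrace] at hinf ⊢
  exact exists_forall_apply_pow_add_mul_eq_zero (Algebra.trace ℤ (𝓞 K)).toAddMonoidHom hβ hinf

end NumberField

section PureMinpoly

theorem norm_coeff_zero_eq_pow_natDegree {P : ℂ[X]} (hP : P.Monic) {ρ : ℝ}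
    (hρ : ∀ z ∈ P.roots, ‖z‖ = ρ) : ‖P.coeff 0‖ = ρ ^ P.natDegree := by
  have hsplits : P.Splits := IsAlgClosed.splits P
  have hnorm : ‖P.roots.prod‖ = (P.roots.map (‖·‖)).prod :=
    map_multiset_prod (normHom : ℂ →*₀ ℝ) P.roots
  rw [hsplits.coeff_zero_eq_prod_roots_of_monic hP, norm_mul, norm_pow, norm_neg, norm_one,
    one_pow, one_mul, hnorm, Multiset.map_congr rfl hρ, Multiset.map_const',
    Multiset.prod_replicate, ← hsplits.natDegree_eq_card_roots]

variable {F K : Type*} [Field F] [Field K] [Algebra F K] {x : K}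

theorem norm_eq_of_mem_roots_map_minpoly (φ : K →+* ℝ) {r : ℕ} (hr : r ≠ 0) {c : F}
    (hc : x ^ r = algebraMap F K c) :
    ∀ z ∈ ((minpoly F x).map ((Complex.ofRealHom.comp φ).comp (algebraMap F K))).roots,
      ‖z‖ = |φ x| := by
  intro z hz
  have hdvd : minpoly F x ∣ X ^ r - C c := minpoly.dvd F x (by simp [hc])
  have hzr : z ^ r = (φ x : ℂ) ^ r := by
    simpa [sub_eq_zero, ← hc] using
      ((mem_roots'.1 hz).2.dvd (Polynomial.map_dvd _ hdvd)).eq_zero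
  refine (pow_left_inj₀ (norm_nonneg z) (abs_nonneg _) hr).1 ?_
  rw [← norm_pow, hzr, norm_pow, Complex.norm_real, Real.norm_eq_abs]

theorem exists_pow_natDegree_minpoly_eq_algebraMap (φ : K →+* ℝ) {r : ℕ} (hr : r ≠ 0) {c : F}
    (hc : x ^ r = algebraMap F K c) :
    ∃ d : F, x ^ (minpoly F x).natDegree = algebraMap F K d := by
  have hint : IsIntegral F x := .of_pow hr.bot_lt (hc ▸ isIntegral_algebraMap)
  have habs : |φ (algebraMap F K ((minpoly F x).coeff 0))| =
      |φ (x ^ (minpoly F x).natDegree)| := by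
    simpa [abs_pow] using norm_coeff_zero_eq_pow_natDegree ((minpoly.monic hint).map _)
      (norm_eq_of_mem_roots_map_minpoly φ hr hc)
  rcases abs_eq_abs.1 habs with heq | heq
  · exact ⟨_, φ.injective heq.symm⟩
  · refine ⟨-(minpoly F x).coeff 0, φ.injective ?_⟩
    rw [map_neg, map_neg, heq, neg_neg]

theorem exists_minpoly_eq_X_pow_sub_C (φ : K →+* ℝ) {r : ℕ} (hr : r ≠ 0) {c : F}
    (hc : x ^ r = algebraMap F K c) :
    ∃ m ≠ 0, ∃ d : F, minpoly F x = X ^ m - C d := by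
  have hint : IsIntegral F x := .of_pow hr.bot_lt (hc ▸ isIntegral_algebraMap)
  obtain ⟨d, hd⟩ := exists_pow_natDegree_minpoly_eq_algebraMap φ hr hc
  have hm : (minpoly F x).natDegree ≠ 0 := (minpoly.natDegree_pos hint).ne'
  refine ⟨_, hm, d, (eq_of_monic_of_dvd_of_natDegree_le (minpoly.monic hint)
    (monic_X_pow_sub_C d hm) (minpoly.dvd F x (by simp [hd])) ?_).symm⟩
  rw [natDegree_X_pow_sub_C]

theorem exists_minpoly_adjoin_pow_eq_X_pow_sub_C (φ : K →+* ℝ) (x : K) {r : ℕ} (hr : r ≠ 0) :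
    ∃ m ≠ 0, ∃ c : F⟮x ^ r⟯, minpoly F⟮x ^ r⟯ x = X ^ m - C c :=
  exists_minpoly_eq_X_pow_sub_C φ hr (c := AdjoinSimple.gen F (x ^ r)) rfl

variable {m : ℕ} {c : F}

theorem pow_eq_algebraMap_of_minpoly_eq_X_pow_sub_C (hmin : minpoly F x = X ^ m - C c) :
    x ^ m = algebraMap F K c := by
  simpa [hmin, sub_eq_zero] using minpoly.aeval F x

theorem trace_eq_zero_of_minpoly_eq_X_pow_sub_C [FiniteDimensional F K]
    (hmin : minpoly F x = X ^ m - C c) (hx : x ∉ (algebraMap F K).range) :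
    Algebra.trace F K x = 0 := by
  have hm : 2 ≤ m := by
    simpa [hmin] using (minpoly.two_le_natDegree_iff (.of_finite F x)).2 hx
  have hcoeff : (X ^ m - C c).nextCoeff = 0 := by
    rw [nextCoeff_of_natDegree_pos (by rw [natDegree_X_pow_sub_C]; lia), natDegree_X_pow_sub_C,
      coeff_sub, coeff_X_pow, coeff_C, if_neg (by lia), if_neg (by lia), sub_zero]
  rw [trace_eq_finrank_mul_minpoly_nextCoeff, hmin, hcoeff, neg_zero, mul_zero]

end PureMinpoly

section RootsOfUnity

theorem finite_torsion_units {K : Type*} [Field K] [NumberField K] :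
    (CommGroup.torsion Kˣ : Set Kˣ).Finite := by
  refine ((Embeddings.finite_of_norm_le K ℂ 1).preimage Units.val_injective.injOn).subset ?_
  intro u hu
  obtain ⟨n, hn, hun⟩ := isOfFinOrder_iff_pow_eq_one.1 hu
  have hpow : (u : K) ^ n = 1 := by rw [← Units.val_pow_eq_pow_val, hun, Units.val_one]
  refine ⟨.of_pow hn (hpow ▸ isIntegral_one), fun φ ↦ ?_⟩
  exact (Complex.norm_eq_one_of_pow_eq_one (by rw [← map_pow, hpow, map_one]) hn.ne').le

theorem dvd_card_torsion_units_of_isPrimitiveRoot {H : Type*} [Field H] {ζ : H} {m : ℕ}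
    (hm : m ≠ 0) (hζ : IsPrimitiveRoot ζ m) : m ∣ Nat.card (CommGroup.torsion Hˣ) := by
  obtain ⟨u, rfl⟩ := hζ.isUnit hm
  have horder : orderOf u = m := orderOf_units.symm.trans hζ.eq_orderOf.symm
  have hu : u ∈ CommGroup.torsion Hˣ := orderOf_pos_iff.1 (horder ▸ hm.bot_lt)
  rw [← horder, ← Subgroup.orderOf_mk u hu]
  exact orderOf_dvd_natCard _

theorem exists_isPrimitiveRoot_of_mem_rootSet {F H Ω : Type*} [Field F] [Field H] [Field Ω]
    [Algebra F H] [Algebra F Ω] (ψ : H →ₐ[F] Ω) {P : F[X]}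
    (hP : (P.map (algebraMap F H)).Splits) {ζ y : Ω} (hy : y ≠ 0) (hyP : y ∈ P.rootSet Ω)
    (hζyP : ζ * y ∈ P.rootSet Ω) {m : ℕ} (hζ : IsPrimitiveRoot ζ m) :
    ∃ ζ' : H, IsPrimitiveRoot ζ' m := by
  rw [← hP.image_rootSet ψ] at hyP hζyP
  obtain ⟨v, -, hv⟩ := hyP
  obtain ⟨w, -, hw⟩ := hζyP
  refine ⟨w / v, .of_map_of_injective (f := ψ) ?_ ψ.injective⟩
  rwa [map_div₀, hv, hw, mul_div_cancel_right₀ ζ hy]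

variable {F L K : Type*} [Field F] [Field L] [Field K] [Algebra F L] [Algebra F K] [Algebra L K]
  [IsScalarTower F L K] {x : K} {m : ℕ} {c : L}

theorem mul_mem_rootSet_minpoly_of_pow_eq_one {Ω : Type*} [Field Ω] [Algebra K Ω] [Algebra F Ω]
    [IsScalarTower F K Ω] (hx : IsIntegral F x) (hmin : minpoly L x = X ^ m - C c) {ζ : Ω}
    (hζ : ζ ^ m = 1) :
    ζ * algebraMap K Ω x ∈ (minpoly F x).rootSet Ω := by
  have hroot : (minpoly L x).eval₂ ((algebraMap K Ω).comp (algebraMap L K))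
      (ζ * algebraMap K Ω x) = 0 := by
    rw [hmin]
    simp [mul_pow, hζ, ← pow_eq_algebraMap_of_minpoly_eq_X_pow_sub_C hmin]
  have hroot_minpoly := eval₂_eq_zero_of_dvd_of_eval₂_eq_zero _ _
    (minpoly.dvd_map_of_isScalarTower F L x) hroot
  rw [mem_rootSet, aeval_def]
  refine ⟨minpoly.ne_zero hx, ?_⟩
  rwa [eval₂_map, RingHom.comp_assoc, ← IsScalarTower.algebraMap_eq,
    ← IsScalarTower.algebraMap_eq] at hroot_minpoly

theorem dvd_card_torsion_units_of_minpoly_eq_X_pow_sub_C [NeZero (m : K)]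
    (hx : IsIntegral F x) (hx0 : x ≠ 0) (hmin : minpoly L x = X ^ m - C c) :
    m ∣ Nat.card (CommGroup.torsion (minpoly F x).SplittingFieldˣ) := by
  have := NeZero.of_neZero_natCast K (n := m)
  have : NeZero (m : AlgebraicClosure K) := NeZero.nat_of_injective (algebraMap K _).injective
  obtain ⟨ζ, hζ⟩ := HasEnoughRootsOfUnity.exists_primitiveRoot (AlgebraicClosure K) m
  have hroot {z : AlgebraicClosure K} (hz : z ^ m = 1) :
      z * algebraMap K _ x ∈ (minpoly F x).rootSet (AlgebraicClosure K) :=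
    mul_mem_rootSet_minpoly_of_pow_eq_one hx hmin hz
  have hxroot := hroot (one_pow m)
  rw [one_mul] at hxroot
  obtain ⟨ζ', hζ'⟩ := exists_isPrimitiveRoot_of_mem_rootSet
    (SplittingField.lift (minpoly F x) (IsAlgClosed.splits _)) (SplittingField.splits _)
    (by simpa using hx0) hxroot (hroot hζ.pow_eq_one) hζ
  exact dvd_card_torsion_units_of_isPrimitiveRoot (NeZero.ne m) hζ'

end RootsOfUnity

section Trace

variable {F K : Type*} [Field F] [Field K] [Algebra F K] {x : K}

theorem pow_card_torsion_units_mem_adjoin_pow (φ : K →+* ℝ) (hx : IsIntegral F x) (hx0 : x ≠ 0)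
    {r : ℕ} (hr : r ≠ 0) :
    x ^ Nat.card (CommGroup.torsion (minpoly F x).SplittingFieldˣ) ∈ F⟮x ^ r⟯ := by
  have : CharZero K := φ.charZero
  obtain ⟨m, hm, c, hmin⟩ := exists_minpoly_adjoin_pow_eq_X_pow_sub_C (F := F) φ x hr
  have : NeZero (m : K) := ⟨Nat.cast_ne_zero.2 hm⟩
  obtain ⟨e, he⟩ := dvd_card_torsion_units_of_minpoly_eq_X_pow_sub_C hx hx0 hmin
  rw [he, pow_mul, pow_eq_algebraMap_of_minpoly_eq_X_pow_sub_C hmin]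
  exact pow_mem c.2 e

theorem exists_notMem_adjoin_pow_iff (φ : K →+* ℝ) (hx : IsIntegral F x) (hx0 : x ≠ 0)
    (hh : Nat.card (CommGroup.torsion (minpoly F x).SplittingFieldˣ) ≠ 0) :
    (∃ r ≠ 0, x ∉ F⟮x ^ r⟯) ↔
      x ∉ F⟮x ^ Nat.card (CommGroup.torsion (minpoly F x).SplittingFieldˣ)⟯ := by
  refine ⟨fun ⟨r, hr, hxr⟩ hxh ↦ hxr ?_, fun hxh ↦ ⟨_, hh, hxh⟩⟩
  exact adjoin_simple_le_iff.2 (pow_card_torsion_units_mem_adjoin_pow φ hx hx0 hr) hxh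

theorem apply_mul_eq_zero_of_mem_adjoin {V : Type*} [AddCommGroup V] [Module F V]
    (ℓ : K →ₗ[F] V) {w y z : K} (hy : IsAlgebraic F y) (hℓ : ∀ k : ℕ, ℓ (w * y ^ k) = 0)
    (hz : z ∈ F⟮y⟯) : ℓ (w * z) = 0 := by
  rw [← IntermediateField.mem_toSubalgebra, adjoin_simple_toSubalgebra_of_isAlgebraic hy,
    Algebra.adjoin_singleton_eq_range_aeval] at hz
  obtain ⟨P, rfl⟩ := hz
  simp [aeval_eq_sum_range, mul_sum, hℓ]

variable [FiniteDimensional F K]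

theorem trace_pow_one_add_mul_eq_zero (φ : K →+* ℝ) {r : ℕ} (hr : r ≠ 0) (hx : x ∉ F⟮x ^ r⟯)
    (k : ℕ) : Algebra.trace F K (x ^ (1 + r * k)) = 0 := by
  obtain ⟨m, -, c, hmin⟩ := exists_minpoly_adjoin_pow_eq_X_pow_sub_C (F := F) φ x hr
  have htrace : Algebra.trace F⟮x ^ r⟯ K x = 0 :=
    trace_eq_zero_of_minpoly_eq_X_pow_sub_C hmin (by simpa using hx)
  have hpow : x ^ (1 + r * k) = AdjoinSimple.gen F (x ^ r) ^ k • x := by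
    rw [Algebra.smul_def, map_pow, AdjoinSimple.algebraMap_gen]
    ring
  rw [← Algebra.trace_trace (S := F⟮x ^ r⟯), hpow, map_smul, htrace, smul_zero, map_zero]

theorem notMem_adjoin_pow_of_trace_eq_zero [CharZero F] (hx0 : x ≠ 0) {a r : ℕ}
    (htrace : ∀ k, Algebra.trace F K (x ^ (a + r * k)) = 0) : x ∉ F⟮x ^ r⟯ := by
  intro hx
  have hone : Algebra.trace F K (x ^ a * (x ^ a)⁻¹) = 0 :=
    apply_mul_eq_zero_of_mem_adjoin (Algebra.trace F K) (.of_finite F (x ^ r))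
      (fun k ↦ by rw [← pow_mul, ← pow_add, htrace k]) (inv_mem (pow_mem hx a))
  rw [mul_inv_cancel₀ (pow_ne_zero a hx0), ← map_one (algebraMap F K),
    Algebra.trace_algebraMap, nsmul_one, Nat.cast_eq_zero] at hone
  exact Module.finrank_pos.ne' hone

end Trace

section RealEmbedding

variable {K : Type*} [Field K] [NumberField K] {x : K}

theorem infinite_setOf_trace_pow_eq_zero_iff_exists_notMem_adjoin_pow (φ : K →+* ℝ)
    (hx : x ≠ 0) :
    {n | Algebra.trace ℚ K (x ^ n) = 0}.Infinite ↔ ∃ r ≠ 0, x ∉ ℚ⟮x ^ r⟯ := by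
  constructor
  · intro hinf
    obtain ⟨a, r, hr, htrace⟩ := exists_forall_trace_pow_add_mul_eq_zero hx hinf
    exact ⟨r, hr, notMem_adjoin_pow_of_trace_eq_zero hx htrace⟩
  · rintro ⟨r, hr, hxr⟩
    exact Set.infinite_of_injective_forall_mem
      ((add_right_injective 1).comp (mul_right_injective₀ hr))
      (trace_pow_one_add_mul_eq_zero φ hr hxr)

theorem zero_trace_infinitely_often_real_general (φ : K →+* ℝ) (hx : x ≠ 0) {h : ℕ}
    (hh : h = Nat.card (CommGroup.torsion (minpoly ℚ x).SplittingFieldˣ)) :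
    {n | Algebra.trace ℚ K (x ^ n) = 0}.Infinite ↔ x ∉ ℚ⟮x ^ h⟯ := by
  have : NumberField (minpoly ℚ x).SplittingField := { }
  have := (finite_torsion_units (K := (minpoly ℚ x).SplittingField)).to_subtype
  rw [infinite_setOf_trace_pow_eq_zero_iff_exists_notMem_adjoin_pow φ hx, hh]
  exact exists_notMem_adjoin_pow_iff φ (.of_finite ℚ x) hx Nat.card_pos.ne'

end RealEmbedding

theorem gen_mem_adjoin_gen_pow_iff {F K : Type*} [Field F] [Field K] [Algebra F K] {α : K}
    {n : ℕ} :
    AdjoinSimple.gen F α ∈ F⟮AdjoinSimple.gen F α ^ n⟯ ↔ α ∈ F⟮α ^ n⟯ := by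
  have hmap : F⟮AdjoinSimple.gen F α ^ n⟯.map F⟮α⟯.val = F⟮α ^ n⟯ := by
    simp [adjoin_map]
  rw [← hmap]
  exact (Subtype.val_injective.mem_set_image (s := (F⟮AdjoinSimple.gen F α ^ n⟯ : Set F⟮α⟯))).symm

/-- Theorem 5 (int3real): for a real positive algebraic `α`, with `h` the order of the group
of roots of unity of the splitting field of its minimal polynomial, the trace
`Tr_{ℚ(α)/ℚ}(αⁿ)` vanishes for infinitely many `n` iff `α ∉ ℚ(α^h)`. -/
theorem zero_trace_infinitely_often_real (α : ℝ) (hpos : 0 < α) (halg : IsAlgebraic ℚ α)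
    (h : ℕ)
    (hh : h = Nat.card (CommGroup.torsion ((minpoly ℚ α).SplittingFieldˣ))) :
    {n : ℕ | Algebra.trace ℚ ℚ⟮α⟯ ((IntermediateField.AdjoinSimple.gen ℚ α) ^ n) = 0}.Infinite
      ↔ α ∉ ℚ⟮α ^ h⟯ := by
  have : NumberField ℚ⟮α⟯ :=
    { to_finiteDimensional := adjoin.finiteDimensional halg.isIntegral }
  have hmin : minpoly ℚ (AdjoinSimple.gen ℚ α) = minpoly ℚ α := minpoly_gen ℚ α
  have hgen : AdjoinSimple.gen ℚ α ≠ 0 := fun h0 ↦ hpos.ne' (congrArg Subtype.val h0)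
  rw [← gen_mem_adjoin_gen_pow_iff]
  exact zero_trace_infinitely_often_real_general (ℚ⟮α⟯.val : ℚ⟮α⟯ →+* ℝ) hgen (by rwa [hmin])
end
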